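/- Lower bound for the Wehrl entropy of SU(1,1) coherent state transforms (Theorem 3.4): Let k > 1 be a real number and let f(ζ) = (1−|ζ|²)^k Φ(ζ) with Φ holomorphic on D and ∫_D |f|² dν_k = 1. Then the Wehrl entropy S(|f|²) = −∫_D |f(ζ)|² ln(|f(ζ)|²) dν_k(ζ) satisfies S(|f|²) ≥ 2k · ln(1 + 1/(2k−1)) = 2k · ln(2k/(2k−1)). -/

import Mathlib

open MeasureTheory Metric

/-- The measure `ν_k` on the unit disc `D ⊆ ℂ`, with density
`((2k−1)/π)(1−|ζ|²)^{−2}` with respect to Lebesgue measure. -/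
noncomputable def nuMeasure (k : ℝ) : Measure ℂ :=
  (volume.restrict (ball (0 : ℂ) 1)).withDensity
    (fun ζ => ENNReal.ofReal ((2 * k - 1) / Real.pi * ((1 - ‖ζ‖ ^ 2) ^ 2)⁻¹))

/-! Write `n = 2 * k`. Jensen's inequality for the logarithm reduces the entropy bound to the
contractive inequality `‖Φ‖_{2 + 2/n} ≤ ‖Φ‖_2` between the Bergman norms for the weights
`(1 - |ζ|²) ^ (n - 1)` and `(1 - |ζ|²) ^ (n - 2)`, normalized so that constants have norm one.
By dilation `Φ` may be taken holomorphic across the unit circle. The Cayley transform then turns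
`Φ` into a function `Ψ` on the upper half plane decaying like `|z + i| ^ (-n)`, and integration by
parts gives `∫ y ^ n |Ψ'|² = n (n - 1) / 4 * ∫ y ^ (n - 2) |Ψ|²`. So the inequality becomes a bound
of `∫ y ^ (n - 1) |Ψ| ^ (2 + 2/n)` by the energy `∫ y ^ n |Ψ'|²`, which is proved by mass transport:
a triangular monotone map carries the density `y ^ n |Ψ| ^ (2 + 4/n)` to the extremal density
`y ^ n |z + i| ^ (-(2 * n + 4))`, and AM–GM for the eigenvalues of its derivative, an integration
by parts and Young's inequality give the bound, with equality for `Ψ = (z + i) ^ (-n)`. -/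

section MonotoneTransport

open Set Filter Topology

/-- A mass density on a set of reals: continuous, integrable, nonnegative, and not identically
zero between any two points of the set, so that it has a strictly increasing primitive there. -/
structure IsMassDensity (S : Set ℝ) (a : ℝ → ℝ) : Prop where
  continuousOn : ContinuousOn a S
  integrableOn : IntegrableOn a S
  nonneg : ∀ x ∈ S, 0 ≤ a x
  exists_pos : ∀ u ∈ S, ∀ v ∈ S, u < v → ∃ c ∈ Icc u v, 0 < a c

/-- The mass that the density `a` on `S` puts to the left of `x`. -/
noncomputable def cumulative (S : Set ℝ) (a : ℝ → ℝ) (x : ℝ) : ℝ :=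
  ∫ t in Iic x, S.indicator a t

lemma isMassDensity_of_pos {S : Set ℝ} {a : ℝ → ℝ} (hcont : ContinuousOn a S)
    (hint : IntegrableOn a S) (hpos : ∀ x ∈ S, 0 < a x) : IsMassDensity S a where
  continuousOn := hcont
  integrableOn := hint
  nonneg x hx := (hpos x hx).le
  exists_pos u hu _ _ huv := ⟨u, left_mem_Icc.2 huv.le, hpos u hu⟩

namespace IsMassDensity

variable {S : Set ℝ} {a : ℝ → ℝ}

lemma integrable_indicator (ha : IsMassDensity S a) (hS : MeasurableSet S) :
    Integrable (S.indicator a) :=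
  (integrable_indicator_iff hS).2 ha.integrableOn

lemma cumulative_sub (ha : IsMassDensity S a) (hS : MeasurableSet S) (u v : ℝ) :
    cumulative S a v - cumulative S a u = ∫ t in u..v, S.indicator a t :=
  intervalIntegral.integral_Iic_sub_Iic (ha.integrable_indicator hS).integrableOn
    (ha.integrable_indicator hS).integrableOn

lemma cumulative_eq (ha : IsMassDensity S a) (hS : MeasurableSet S) :
    cumulative S a =
      fun x => cumulative S a 0 + ∫ t in (0 : ℝ)..x, S.indicator a t := by
  funext x
  rw [← ha.cumulative_sub hS, add_sub_cancel]

lemma continuous_cumulative (ha : IsMassDensity S a) (hS : MeasurableSet S) :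
    Continuous (cumulative S a) := by
  rw [ha.cumulative_eq hS]
  exact continuous_const.add ((ha.integrable_indicator hS).continuous_primitive 0)

lemma monotone_cumulative (ha : IsMassDensity S a) (hS : MeasurableSet S) :
    Monotone (cumulative S a) := fun u v huv => by
  rw [← sub_nonneg, ha.cumulative_sub hS]
  exact intervalIntegral.integral_nonneg huv fun t _ => indicator_nonneg ha.nonneg t

lemma strictMonoOn_cumulative (ha : IsMassDensity S a) (hS : MeasurableSet S)
    (hSc : S.OrdConnected) : StrictMonoOn (cumulative S a) S := by
  intro u hu v hv huv
  have hsub : Icc u v ⊆ S := hSc.out hu hv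
  have hcongr : ∫ t in u..v, S.indicator a t = ∫ t in u..v, a t :=
    intervalIntegral.integral_congr fun t ht =>
      indicator_of_mem (hsub (by rwa [uIcc_of_le huv.le] at ht)) a
  rw [← sub_pos, ha.cumulative_sub hS, hcongr]
  exact intervalIntegral.integral_pos huv (ha.continuousOn.mono hsub)
    (fun x hx => ha.nonneg x (hsub (Ioc_subset_Icc_self hx))) (ha.exists_pos u hu v hv huv)

lemma hasDerivAt_cumulative (ha : IsMassDensity S a) (hS : IsOpen S) {x : ℝ} (hx : x ∈ S) :
    HasDerivAt (cumulative S a) (a x) x := by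
  have hint := ha.integrable_indicator hS.measurableSet
  have heq : S.indicator a =ᶠ[𝓝 x] a := by
    filter_upwards [hS.mem_nhds hx] with y hy using indicator_of_mem hy a
  have hcont : ContinuousAt (S.indicator a) x :=
    (ha.continuousOn.continuousAt (hS.mem_nhds hx)).congr heq.symm
  rw [ha.cumulative_eq hS.measurableSet, ← heq.eq_of_nhds]
  exact (intervalIntegral.integral_hasDerivAt_right hint.intervalIntegrable
    hint.aestronglyMeasurable.stronglyMeasurableAtFilter hcont).const_add _

lemma tendsto_cumulative_atBot : Tendsto (cumulative S a) atBot (𝓝 0) :=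
  tendsto_integral_Iic_zero tendsto_id

lemma tendsto_cumulative_atTop (ha : IsMassDensity S a) (hS : MeasurableSet S) :
    Tendsto (cumulative S a) atTop (𝓝 (∫ x in S, a x)) := by
  have hint := ha.integrable_indicator hS
  rw [← integral_indicator hS, ha.cumulative_eq hS,
    ← intervalIntegral.integral_Iic_add_Ioi (b := 0) hint.integrableOn hint.integrableOn]
  exact tendsto_const_nhds.add
    (intervalIntegral_tendsto_integral_Ioi 0 hint.integrableOn tendsto_id)

lemma cumulative_mem_Ioo (ha : IsMassDensity S a) (hS : IsOpen S) (hSc : S.OrdConnected)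
    {x : ℝ} (hx : x ∈ S) : cumulative S a x ∈ Ioo 0 (∫ t in S, a t) := by
  have hmono := ha.monotone_cumulative hS.measurableSet
  have hstrict := ha.strictMonoOn_cumulative hS.measurableSet hSc
  obtain ⟨l, hl, hlS⟩ := (mem_nhdsLT_iff_exists_Ioo_subset).1
    (mem_nhdsWithin_of_mem_nhds (hS.mem_nhds hx))
  obtain ⟨r, hr, hrS⟩ := (mem_nhdsGT_iff_exists_Ioo_subset).1
    (mem_nhdsWithin_of_mem_nhds (hS.mem_nhds hx))
  obtain ⟨u, hu⟩ := exists_between (mem_Iio.1 hl)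
  obtain ⟨v, hv⟩ := exists_between (mem_Ioi.1 hr)
  exact ⟨(hmono.le_of_tendsto tendsto_cumulative_atBot u).trans_lt (hstrict (hlS hu) hx hu.2),
    (hstrict hx (hrS hv) hv.1).trans_le
      (hmono.ge_of_tendsto (ha.tendsto_cumulative_atTop hS.measurableSet) v)⟩

lemma integral_pos (ha : IsMassDensity S a) (hS : IsOpen S) (hSc : S.OrdConnected)
    (hne : S.Nonempty) : 0 < ∫ t in S, a t :=
  have hmem := ha.cumulative_mem_Ioo hS hSc hne.some_mem
  hmem.1.trans hmem.2

lemma mem_of_cumulative_mem_Ioo (hS : MeasurableSet S) (hSc : S.OrdConnected) {x : ℝ}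
    (hx : cumulative S a x ∈ Ioo 0 (∫ t in S, a t)) : x ∈ S := by
  by_contra hxS
  have hside : (∀ y ∈ S, x < y) ∨ ∀ y ∈ S, y < x := by
    by_contra! hcon
    obtain ⟨⟨y, hy, hyx⟩, z, hz, hzx⟩ := hcon
    exact hxS (hSc.out hy hz ⟨hyx, hzx⟩)
  rcases hside with hright | hleft
  · exact hx.1.ne' (setIntegral_eq_zero_of_forall_eq_zero fun t ht =>
      indicator_of_notMem (fun htS => (hright t htS).not_ge ht) a)
  · refine hx.2.ne ?_
    rw [← integral_indicator hS]
    exact setIntegral_eq_integral_of_forall_compl_eq_zero fun t ht =>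
      indicator_of_notMem (fun htS => ht (hleft t htS).le) a

lemma image_cumulative (ha : IsMassDensity S a) (hS : IsOpen S) (hSc : S.OrdConnected) :
    cumulative S a '' S = Ioo 0 (∫ t in S, a t) := by
  refine Subset.antisymm (image_subset_iff.2 fun x hx => ha.cumulative_mem_Ioo hS hSc hx) ?_
  intro s hs
  obtain ⟨l, hl⟩ := (tendsto_cumulative_atBot.eventually (gt_mem_nhds hs.1)).exists
  obtain ⟨r, hr⟩ :=
    ((ha.tendsto_cumulative_atTop hS.measurableSet).eventually (lt_mem_nhds hs.2)).exists
  obtain ⟨x, rfl⟩ := mem_range_of_exists_le_of_exists_ge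
    (ha.continuous_cumulative hS.measurableSet) ⟨l, hl.le⟩ ⟨r, hr.le⟩
  exact ⟨x, mem_of_cumulative_mem_Ioo hS.measurableSet hSc hs, rfl⟩

end IsMassDensity

lemma exists_monotone_transport {S S' : Set ℝ} {a b : ℝ → ℝ} (hS : IsOpen S)
    (hSc : S.OrdConnected) (ha : IsMassDensity S a) (hS' : IsOpen S') (hSc' : S'.OrdConnected)
    (hb : IsMassDensity S' b) (hbpos : ∀ t ∈ S', 0 < b t)
    (hmass : ∫ x in S, a x = ∫ t in S', b t) :
    ∃ T : ℝ → ℝ, StrictMonoOn T S ∧ T '' S = S' ∧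
      ∀ x ∈ S, HasDerivAt T (a x / b (T x)) x := by
  set A := cumulative S a
  set B := cumulative S' b
  have hA := ha.image_cumulative hS hSc
  have hB := hb.image_cumulative hS' hSc'
  have hBmono : StrictMonoOn B S' := hb.strictMonoOn_cumulative hS'.measurableSet hSc'
  have hbij : BijOn B S' (Ioo 0 (∫ t in S', b t)) := ⟨mapsTo_iff_image_subset.2 hB.subset,
    hBmono.injOn, hB.superset⟩
  set G := Function.invFunOn B S'
  have hinv : InvOn G B S' (Ioo 0 (∫ t in S', b t)) := hbij.invOn_invFunOn
  have hG : BijOn G (Ioo 0 (∫ t in S', b t)) S' := hbij.symm hinv.symm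
  have hGmono : StrictMonoOn G (Ioo 0 (∫ t in S', b t)) := fun s hs t ht hst => by
    rwa [← hBmono.lt_iff_lt (hG.mapsTo hs) (hG.mapsTo ht), hinv.2 hs, hinv.2 ht]
  have hAmem : MapsTo A S (Ioo 0 (∫ t in S', b t)) := by
    rw [← hmass]
    exact mapsTo_iff_image_subset.2 hA.subset
  refine ⟨G ∘ A, ?_, ?_, fun x hx => ?_⟩
  · exact hGmono.comp (ha.strictMonoOn_cumulative hS.measurableSet hSc) hAmem
  · rw [image_comp, hA, hmass, hG.image_eq]
  · have hs := hAmem hx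
    have hnhds := isOpen_Ioo.mem_nhds hs
    have hcont : ContinuousAt G (A x) := hGmono.continuousAt_of_image_mem_nhds hnhds
      (by rw [hG.image_eq]; exact hS'.mem_nhds (hG.mapsTo hs))
    have hderiv : HasDerivAt G (b (G (A x)))⁻¹ (A x) :=
      (hb.hasDerivAt_cumulative hS' (hG.mapsTo hs)).of_local_left_inverse hcont
        (hbpos _ (hG.mapsTo hs)).ne' (by filter_upwards [hnhds] with s hs using hinv.2 hs)
    rw [div_eq_inv_mul]
    exact hderiv.comp x (ha.hasDerivAt_cumulative hS hx)

/-- `T`, with derivative `T'`, is a monotone rearrangement of the density `a` on `S` into the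
density `b` on `S'`: it solves the one-dimensional Monge–Ampère equation `a = T' * (b ∘ T)`. -/
structure IsTransport (S S' : Set ℝ) (a b T T' : ℝ → ℝ) : Prop where
  strictMonoOn : StrictMonoOn T S
  image_eq : T '' S = S'
  hasDerivAt : ∀ x ∈ S, HasDerivAt T (T' x) x
  deriv_nonneg : ∀ x ∈ S, 0 ≤ T' x
  density_eq : ∀ x ∈ S, a x = T' x * b (T x)

lemma exists_isTransport {S S' : Set ℝ} {a b : ℝ → ℝ} (hS : IsOpen S)
    (hSc : S.OrdConnected) (ha : IsMassDensity S a) (hS' : IsOpen S') (hSc' : S'.OrdConnected)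
    (hb : IsMassDensity S' b) (hbpos : ∀ t ∈ S', 0 < b t)
    (hmass : ∫ x in S, a x = ∫ t in S', b t) : ∃ T T', IsTransport S S' a b T T' := by
  obtain ⟨T, hmono, himage, hderiv⟩ := exists_monotone_transport hS hSc ha hS' hSc' hb hbpos hmass
  have hpos (x : ℝ) (hx : x ∈ S) : 0 < b (T x) := hbpos _ (himage ▸ mem_image_of_mem T hx)
  exact ⟨T, fun x => a x / b (T x), hmono, himage, hderiv,
    fun x hx => div_nonneg (ha.nonneg x hx) (hpos x hx).le,
    fun x hx => (div_mul_cancel₀ _ (hpos x hx).ne').symm⟩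

namespace IsTransport

variable {S S' : Set ℝ} {a b T T' : ℝ → ℝ}

lemma mapsTo (hT : IsTransport S S' a b T T') : MapsTo T S S' :=
  mapsTo_iff_image_subset.2 hT.image_eq.subset

lemma continuousOn (hT : IsTransport S S' a b T T') : ContinuousOn T S :=
  fun x hx => (hT.hasDerivAt x hx).continuousAt.continuousWithinAt

lemma integrableOn_deriv_mul_comp (hT : IsTransport S S' a b T T') (hS : MeasurableSet S)
    {g : ℝ → ℝ} (hg : IntegrableOn g S') : IntegrableOn (fun x => T' x * g (T x)) S := by
  rw [← hT.image_eq] at hg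
  exact (integrableOn_image_iff_integrableOn_deriv_smul_of_monotoneOn hS
    (fun x hx => (hT.hasDerivAt x hx).hasDerivWithinAt) hT.strictMonoOn.monotoneOn g).1 hg

lemma integral_deriv_mul_comp (hT : IsTransport S S' a b T T') (hS : MeasurableSet S)
    (g : ℝ → ℝ) : ∫ x in S, T' x * g (T x) = ∫ t in S', g t := by
  rw [← hT.image_eq]
  exact (integral_image_eq_integral_deriv_smul_of_monotoneOn hS
    (fun x hx => (hT.hasDerivAt x hx).hasDerivWithinAt) hT.strictMonoOn.monotoneOn g).symm

lemma integrableOn_deriv (hT : IsTransport S S' a b T T') (hS : MeasurableSet S)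
    (hS' : volume S' ≠ ⊤) : IntegrableOn T' S := by
  simpa only [mul_one] using
    hT.integrableOn_deriv_mul_comp hS (g := fun _ => 1) (integrableOn_const hS')

lemma exists_norm_add_le (hT : IsTransport S S' a b T T') (hS' : Bornology.IsBounded S') (c : ℝ) :
    ∃ B, ∀ x ∈ S, ‖T x + c‖ ≤ B := by
  obtain ⟨B, hB⟩ := hS'.exists_norm_le
  exact ⟨B + ‖c‖, fun x hx => (norm_add_le _ _).trans
    (add_le_add (hB _ (hT.mapsTo hx)) le_rfl)⟩

lemma integrableOn_mul_add (hT : IsTransport S S' a b T T') (hS : MeasurableSet S)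
    (hS' : Bornology.IsBounded S') {f : ℝ → ℝ} (hf : IntegrableOn f S) (c : ℝ) :
    IntegrableOn (fun x => f x * (T x + c)) S := by
  obtain ⟨B, hB⟩ := hT.exists_norm_add_le hS' c
  refine Integrable.mul_bdd (c := B) hf
    ((hT.continuousOn.add continuousOn_const).aestronglyMeasurable hS) ?_
  filter_upwards [ae_restrict_mem hS] with x hx using hB x hx

lemma integrableOn_mul_deriv (hT : IsTransport S S' a b T T') (hS : MeasurableSet S)
    (hS' : Bornology.IsBounded S') {f : ℝ → ℝ} (hf : ContinuousOn f S)
    (hfB : ∃ B, ∀ x ∈ S, ‖f x‖ ≤ B) : IntegrableOn (fun x => f x * T' x) S := by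
  obtain ⟨B, hB⟩ := hfB
  refine Integrable.bdd_mul (c := B) (hT.integrableOn_deriv hS hS'.measure_lt_top.ne)
    (hf.aestronglyMeasurable hS) ?_
  filter_upwards [ae_restrict_mem hS] with x hx using hB x hx

lemma integral_Ioi_deriv_mul_add {l : ℝ} (hT : IsTransport (Ioi l) S' a b T T')
    (hS' : Bornology.IsBounded S') {f f' : ℝ → ℝ} (hf : ∀ x ∈ Ioi l, HasDerivAt f (f' x) x)
    (hf' : IntegrableOn f' (Ioi l)) (hfB : ∃ B, ∀ x ∈ Ioi l, ‖f x‖ ≤ B)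
    (hf_left : Tendsto f (𝓝[>] l) (𝓝 0)) (hf_top : Tendsto f atTop (𝓝 0)) (c : ℝ) :
    IntegrableOn (fun x => f' x * (T x + c) + f x * T' x) (Ioi l) ∧
      ∫ x in Ioi l, (f' x * (T x + c) + f x * T' x) = 0 := by
  have hint : IntegrableOn (fun x => f' x * (T x + c) + f x * T' x) (Ioi l) :=
    (hT.integrableOn_mul_add measurableSet_Ioi hS' hf' c).add
      (hT.integrableOn_mul_deriv measurableSet_Ioi hS'
        (fun x hx => (hf x hx).continuousAt.continuousWithinAt) hfB)
  obtain ⟨B, hB⟩ := hT.exists_norm_add_le hS' c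
  have hlim {L : Filter ℝ} (hL : ∀ᶠ x in L, x ∈ Ioi l) (hfL : Tendsto f L (𝓝 0)) :
      Tendsto (f * fun x => T x + c) L (𝓝 0) := by
    refine hfL.zero_mul_isBoundedUnder_le (isBoundedUnder_of_eventually_le (a := B) ?_)
    filter_upwards [hL] with x hx using hB x hx
  refine ⟨hint, ?_⟩
  rw [integral_Ioi_deriv_mul_eq_sub hf (fun x hx => (hT.hasDerivAt x hx).add_const c) hint
    (hlim self_mem_nhdsWithin hf_left) (hlim (eventually_gt_atTop l) hf_top), sub_zero]

lemma integral_deriv_mul_add (hT : IsTransport univ S' a b T T') (hS' : Bornology.IsBounded S')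
    {f f' : ℝ → ℝ} (hf : ∀ x, HasDerivAt f (f' x) x) (hf_int : Integrable f)
    (hf' : Integrable f') (hfB : ∃ B, ∀ x, ‖f x‖ ≤ B) :
    Integrable (fun x => f' x * T x + f x * T' x) ∧ ∫ x, (f' x * T x + f x * T' x) = 0 := by
  have hmul {g : ℝ → ℝ} (hg : Integrable g) : Integrable fun x => g x * T x := by
    simpa only [add_zero, integrableOn_univ] using
      hT.integrableOn_mul_add .univ hS' (integrableOn_univ.2 hg) 0
  have hderiv : Integrable fun x => f x * T' x :=
    integrableOn_univ.1 <| hT.integrableOn_mul_deriv .univ hS'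
      (continuous_iff_continuousAt.2 fun x => (hf x).continuousAt).continuousOn
      (hfB.imp fun B hB x _ => hB x)
  refine ⟨(hmul hf').add hderiv, ?_⟩
  rw [integral_add (hmul hf') hderiv, integral_mul_deriv_eq_deriv_mul_of_integrable
    (fun x _ => hf x) (fun x _ => hT.hasDerivAt x (mem_univ x)) hderiv (hmul hf') (hmul hf_int),
    add_neg_cancel]

end IsTransport

end MonotoneTransport

section WeightedDecay

open Set Filter Topology UpperHalfPlane

lemma measurePreserving_complex_mk {S S' : Set ℝ} (hS : MeasurableSet S)
    (hS' : MeasurableSet S') : MeasurePreserving (fun p : ℝ × ℝ => (⟨p.1, p.2⟩ : ℂ))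
      ((volume.restrict S).prod (volume.restrict S')) (volume.restrict (S ×ℂ S')) := by
  have hmeas : MeasurableSet (S ×ℂ S') :=
    (Complex.measurable_re hS).inter (Complex.measurable_im hS')
  rw [Measure.prod_restrict]
  exact Complex.volume_preserving_equiv_real_prod.symm.restrict_preimage hmeas

lemma measurableEmbedding_complex_mk :
    MeasurableEmbedding (fun p : ℝ × ℝ => (⟨p.1, p.2⟩ : ℂ)) :=
  Complex.measurableEquivRealProd.symm.measurableEmbedding

lemma integrableOn_reProdIm_iff {S S' : Set ℝ} (hS : MeasurableSet S) (hS' : MeasurableSet S')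
    {F : ℂ → ℝ} : IntegrableOn F (S ×ℂ S') ↔ Integrable (fun p : ℝ × ℝ => F ⟨p.1, p.2⟩)
      ((volume.restrict S).prod (volume.restrict S')) :=
  ((measurePreserving_complex_mk hS hS').integrable_comp_emb measurableEmbedding_complex_mk).symm

lemma setIntegral_reProdIm {S S' : Set ℝ} (hS : MeasurableSet S) (hS' : MeasurableSet S')
    {F : ℂ → ℝ} (hF : IntegrableOn F (S ×ℂ S')) :
    ∫ z in S ×ℂ S', F z = ∫ x in S, ∫ y in S', F ⟨x, y⟩ := by
  rw [← (measurePreserving_complex_mk hS hS').integral_comp measurableEmbedding_complex_mk]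
  exact integral_prod _ ((integrableOn_reProdIm_iff hS hS').1 hF)

lemma setIntegral_reProdIm_symm {S S' : Set ℝ} (hS : MeasurableSet S) (hS' : MeasurableSet S')
    {F : ℂ → ℝ} (hF : IntegrableOn F (S ×ℂ S')) :
    ∫ z in S ×ℂ S', F z = ∫ y in S', ∫ x in S, F ⟨x, y⟩ := by
  rw [← (measurePreserving_complex_mk hS hS').integral_comp measurableEmbedding_complex_mk]
  exact integral_prod_symm _ ((integrableOn_reProdIm_iff hS hS').1 hF)

lemma upperHalfPlaneSet_eq_reProdIm : upperHalfPlaneSet = univ ×ℂ Ioi 0 :=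
  (univ_inter _).symm

lemma integrableOn_upperHalfPlaneSet_iff {F : ℂ → ℝ} :
    IntegrableOn F upperHalfPlaneSet ↔ Integrable (fun p : ℝ × ℝ => F ⟨p.1, p.2⟩)
      ((volume : Measure ℝ).prod (volume.restrict (Ioi 0))) := by
  rw [upperHalfPlaneSet_eq_reProdIm, integrableOn_reProdIm_iff .univ measurableSet_Ioi,
    Measure.restrict_univ]

lemma setIntegral_upperHalfPlaneSet {F : ℂ → ℝ} (hF : IntegrableOn F upperHalfPlaneSet) :
    ∫ z in upperHalfPlaneSet, F z = ∫ x : ℝ, ∫ y in Ioi (0 : ℝ), F ⟨x, y⟩ := by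
  rw [upperHalfPlaneSet_eq_reProdIm] at hF ⊢
  rw [setIntegral_reProdIm .univ measurableSet_Ioi hF, setIntegral_univ]

lemma setIntegral_upperHalfPlaneSet_symm {F : ℂ → ℝ} (hF : IntegrableOn F upperHalfPlaneSet) :
    ∫ z in upperHalfPlaneSet, F z = ∫ y in Ioi (0 : ℝ), ∫ x : ℝ, F ⟨x, y⟩ := by
  rw [upperHalfPlaneSet_eq_reProdIm] at hF ⊢
  simp only [setIntegral_reProdIm_symm .univ measurableSet_Ioi hF, setIntegral_univ]

lemma norm_add_I_pos {z : ℂ} (hz : z ∈ upperHalfPlaneSet) : 0 < ‖z + Complex.I‖ := by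
  refine norm_pos_iff.2 fun h => ?_
  have him := congrArg Complex.im h
  simp only [Complex.add_im, Complex.I_im, Complex.zero_im] at him
  linarith [show 0 < z.im from hz]

lemma one_add_le_norm_mk_add_I (x : ℝ) {y : ℝ} (hy : 0 < y) :
    1 + ‖y‖ ≤ ‖(⟨x, y⟩ : ℂ) + Complex.I‖ := by
  have h := Complex.abs_im_le_norm ((⟨x, y⟩ : ℂ) + Complex.I)
  simp only [Complex.add_im, Complex.I_im] at h
  rw [Real.norm_of_nonneg hy.le]
  linarith [le_abs_self (y + 1)]

lemma one_add_sq_le_norm_mk_add_I_sq (x : ℝ) {y : ℝ} (hy : 0 < y) :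
    1 + ‖x‖ ^ 2 ≤ ‖(⟨x, y⟩ : ℂ) + Complex.I‖ ^ 2 := by
  rw [← Complex.normSq_eq_norm_sq, Complex.normSq_apply, Real.norm_eq_abs, sq_abs]
  simp only [Complex.add_re, Complex.add_im, Complex.I_re, Complex.I_im]
  nlinarith

/-- `F` is continuous on the upper half plane and `O((im z) ^ s * |z + i| ^ (-t))` there. Every
boundary term and every interchange of integrals in the half plane is controlled through the
pair `(s, t)`. -/
structure WeightedDecay {E : Type*} [NormedAddCommGroup E] (s t : ℝ) (F : ℂ → E) : Prop where
  continuousOn : ContinuousOn F upperHalfPlaneSet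
  bound : ∃ C, ∀ z ∈ upperHalfPlaneSet, ‖F z‖ ≤ C * (z.im ^ s * ‖z + Complex.I‖ ^ (-t))

namespace WeightedDecay

variable {E : Type*} [NormedAddCommGroup E] {s t : ℝ}

lemma exists_bound_nonneg {F : ℂ → E} (hF : WeightedDecay s t F) :
    ∃ C, 0 ≤ C ∧ ∀ z ∈ upperHalfPlaneSet,
      ‖F z‖ ≤ C * (z.im ^ s * ‖z + Complex.I‖ ^ (-t)) := by
  obtain ⟨C, hC⟩ := hF.bound
  refine ⟨max C 0, le_max_right _ _, fun z hz => (hC z hz).trans ?_⟩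
  have hz' : 0 < z.im := hz
  gcongr
  exact le_max_left _ _

lemma of_norm_le {E' : Type*} [NormedAddCommGroup E'] {F : ℂ → E} {G : ℂ → E'}
    (hF : WeightedDecay s t F) (hG : ContinuousOn G upperHalfPlaneSet) {c : ℝ} (hc : 0 ≤ c)
    (hGF : ∀ z ∈ upperHalfPlaneSet, ‖G z‖ ≤ c * ‖F z‖) : WeightedDecay s t G := by
  obtain ⟨C, hC⟩ := hF.bound
  refine ⟨hG, c * C, fun z hz => (hGF z hz).trans ?_⟩
  rw [mul_assoc]
  exact mul_le_mul_of_nonneg_left (hC z hz) hc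

lemma add {F G : ℂ → E} (hF : WeightedDecay s t F) (hG : WeightedDecay s t G) :
    WeightedDecay s t (fun z => F z + G z) := by
  obtain ⟨C, hC⟩ := hF.bound
  obtain ⟨D, hD⟩ := hG.bound
  refine ⟨hF.continuousOn.add hG.continuousOn, C + D, fun z hz => ?_⟩
  rw [add_mul]
  exact (norm_add_le _ _).trans (add_le_add (hC z hz) (hD z hz))

lemma neg {F : ℂ → E} (hF : WeightedDecay s t F) : WeightedDecay s t (fun z => -F z) :=
  hF.of_norm_le hF.continuousOn.neg zero_le_one fun z _ => by rw [norm_neg, one_mul]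

lemma sub {F G : ℂ → E} (hF : WeightedDecay s t F) (hG : WeightedDecay s t G) :
    WeightedDecay s t (fun z => F z - G z) := by
  simpa only [sub_eq_add_neg] using hF.add hG.neg

lemma const_mul {F : ℂ → ℝ} (hF : WeightedDecay s t F) (c : ℝ) :
    WeightedDecay s t (fun z => c * F z) :=
  hF.of_norm_le (continuousOn_const.mul hF.continuousOn) (norm_nonneg c) fun _ _ =>
    norm_mul_le _ _

lemma norm_rpow {F : ℂ → E} (hF : WeightedDecay s t F) {p : ℝ} (hp : 0 ≤ p) :
    WeightedDecay (p * s) (p * t) (fun z => ‖F z‖ ^ p) := by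
  obtain ⟨C, hC0, hC⟩ := hF.exists_bound_nonneg
  refine ⟨hF.continuousOn.norm.rpow_const fun z _ => Or.inr hp, C ^ p, fun z hz => ?_⟩
  have hz' : 0 < z.im := hz
  rw [Real.norm_of_nonneg (by positivity)]
  calc ‖F z‖ ^ p ≤ (C * (z.im ^ s * ‖z + Complex.I‖ ^ (-t))) ^ p := by gcongr; exact hC z hz
    _ = C ^ p * (z.im ^ (p * s) * ‖z + Complex.I‖ ^ (-(p * t))) := by
        rw [Real.mul_rpow hC0 (by positivity), Real.mul_rpow (by positivity) (by positivity),
          ← Real.rpow_mul hz'.le, ← Real.rpow_mul (norm_nonneg _), mul_comm s, mul_comm (-t),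
          mul_neg]

lemma norm_mul_norm {E' : Type*} [NormedAddCommGroup E'] {F : ℂ → E} {G : ℂ → E'} {s' t' : ℝ}
    (hF : WeightedDecay s t F) (hG : WeightedDecay s' t' G) :
    WeightedDecay (s + s') (t + t') (fun z => ‖F z‖ * ‖G z‖) := by
  obtain ⟨C, hC0, hC⟩ := hF.exists_bound_nonneg
  obtain ⟨D, hD⟩ := hG.bound
  refine ⟨hF.continuousOn.norm.mul hG.continuousOn.norm, C * D, fun z hz => ?_⟩
  have hz' : 0 < z.im := hz
  rw [Real.norm_of_nonneg (by positivity), Real.rpow_add hz', neg_add,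
    Real.rpow_add (norm_add_I_pos hz)]
  calc ‖F z‖ * ‖G z‖ ≤ (C * (z.im ^ s * ‖z + Complex.I‖ ^ (-t)))
        * (D * (z.im ^ s' * ‖z + Complex.I‖ ^ (-t'))) := by
        gcongr
        exacts [hC z hz, hD z hz]
    _ = _ := by ring

lemma norm_sq {F : ℂ → E} (hF : WeightedDecay s t F) :
    WeightedDecay (s + s) (t + t) (fun z => ‖F z‖ ^ 2) := by
  simpa only [sq] using hF.norm_mul_norm hF

lemma real_inner {F G : ℂ → ℂ} {s' t' : ℝ} (hF : WeightedDecay s t F) (hG : WeightedDecay s' t' G) :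
    WeightedDecay (s + s') (t + t') (fun z => inner ℝ (F z) (G z)) :=
  (hF.norm_mul_norm hG).of_norm_le (hF.continuousOn.inner hG.continuousOn) zero_le_one
    fun z _ => by
      rw [one_mul, norm_mul, norm_norm, norm_norm]
      exact norm_inner_le_norm _ _

lemma im_rpow_mul {F : ℂ → ℝ} (hF : WeightedDecay 0 t F) (s : ℝ) :
    WeightedDecay s t (fun z => z.im ^ s * F z) := by
  obtain ⟨C, hC⟩ := hF.bound
  have him : ContinuousOn (fun z : ℂ => z.im ^ s) upperHalfPlaneSet :=
    Complex.continuous_im.continuousOn.rpow_const fun z hz => Or.inl (ne_of_gt hz)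
  refine ⟨him.mul hF.continuousOn, C, fun z hz => ?_⟩
  have hz' : 0 < z.im := hz
  have h := mul_le_mul_of_nonneg_left (hC z hz) (Real.rpow_nonneg hz'.le s)
  rw [Real.rpow_zero, one_mul] at h
  rw [norm_mul, Real.norm_of_nonneg (by positivity)]
  linarith

end WeightedDecay

end WeightedDecay

section DecayConsequences

open Set Filter Topology UpperHalfPlane

lemma continuous_complex_mk : Continuous fun p : ℝ × ℝ => (⟨p.1, p.2⟩ : ℂ) :=
  Complex.equivRealProdCLM.symm.continuous

lemma continuous_horizontal {E : Type*} [TopologicalSpace E] {F : ℂ → E}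
    (hF : ContinuousOn F upperHalfPlaneSet) {y : ℝ} (hy : 0 < y) :
    Continuous fun x : ℝ => F ⟨x, y⟩ :=
  hF.comp_continuous (continuous_complex_mk.comp (Continuous.prodMk_left y)) fun _ => hy

lemma continuousOn_vertical {E : Type*} [TopologicalSpace E] {F : ℂ → E}
    (hF : ContinuousOn F upperHalfPlaneSet) (x : ℝ) :
    ContinuousOn (fun y : ℝ => F ⟨x, y⟩) (Ioi 0) :=
  hF.comp (continuous_complex_mk.comp (Continuous.prodMk_right x)).continuousOn fun _ hy => hy

lemma tendsto_mk_atTop (x : ℝ) : Tendsto (fun y : ℝ => (⟨x, y⟩ : ℂ)) atTop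
    (cocompact ℂ ⊓ 𝓟 upperHalfPlaneSet) := by
  refine tendsto_inf.2 ⟨?_, tendsto_principal.2 (eventually_gt_atTop 0)⟩
  rw [← cobounded_eq_cocompact, ← tendsto_norm_atTop_iff_cobounded]
  exact tendsto_atTop_mono (fun y => (le_abs_self y).trans (Complex.abs_im_le_norm ⟨x, y⟩))
    tendsto_id

namespace WeightedDecay

variable {s t : ℝ} {F : ℂ → ℝ}

lemma exists_product_bound (hF : WeightedDecay s t F) (hs : 0 ≤ s) (hst : s + 2 < t) :
    ∃ C r : ℝ, 0 ≤ C ∧ 1 < r ∧ ∀ x y : ℝ, 0 < y →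
      ‖F ⟨x, y⟩‖ ≤ C * ((1 + ‖x‖ ^ 2) ^ (-r / 2) * (1 + ‖y‖) ^ (-r)) := by
  obtain ⟨C, hC0, hC⟩ := hF.exists_bound_nonneg
  refine ⟨C, (t - s) / 2, hC0, by linarith, fun x y hy => (hC ⟨x, y⟩ hy).trans ?_⟩
  gcongr C * ?_
  set N := ‖(⟨x, y⟩ : ℂ) + Complex.I‖
  have hyN : 1 + ‖y‖ ≤ N := one_add_le_norm_mk_add_I x hy
  have hxN : 1 + ‖x‖ ^ 2 ≤ N ^ 2 := one_add_sq_le_norm_mk_add_I_sq x hy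
  have hN : 0 < N := norm_add_I_pos hy
  have hys : y ^ s ≤ N ^ s :=
    Real.rpow_le_rpow hy.le (by linarith [Real.le_norm_self y]) hs
  calc y ^ s * N ^ (-t) ≤ N ^ s * N ^ (-t) := by gcongr
    _ = (N ^ 2) ^ (-((t - s) / 2) / 2) * N ^ (-((t - s) / 2)) := by
        rw [← Real.rpow_add hN, ← Real.rpow_natCast, ← Real.rpow_mul hN.le, ← Real.rpow_add hN]
        congr 1
        push_cast
        ring
    _ ≤ (1 + ‖x‖ ^ 2) ^ (-((t - s) / 2) / 2) * (1 + ‖y‖) ^ (-((t - s) / 2)) := by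
        gcongr ?_ * ?_ <;> apply Real.rpow_le_rpow_of_nonpos <;> first | positivity | linarith

lemma integrableOn (hF : WeightedDecay s t F) (hs : 0 ≤ s) (hst : s + 2 < t) :
    IntegrableOn F upperHalfPlaneSet := by
  obtain ⟨C, r, -, hr, hbound⟩ := hF.exists_product_bound hs hst
  have hmeas := hF.continuousOn.aestronglyMeasurable
    (μ := volume) isOpen_upperHalfPlaneSet.measurableSet
  have hx : Integrable fun x : ℝ => (1 + ‖x‖ ^ 2) ^ (-r / 2) :=
    integrable_rpow_neg_one_add_norm_sq (by simpa using hr)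
  have hy : IntegrableOn (fun y : ℝ => (1 + ‖y‖) ^ (-r)) (Ioi 0) :=
    (integrable_one_add_norm (by simpa using hr)).integrableOn
  have hmk := measurePreserving_complex_mk .univ (measurableSet_Ioi (a := (0 : ℝ)))
  rw [Measure.restrict_univ, ← upperHalfPlaneSet_eq_reProdIm] at hmk
  rw [integrableOn_upperHalfPlaneSet_iff]
  refine ((hx.mul_prod hy).const_mul C).mono' (hmeas.comp_measurePreserving hmk) ?_
  have hae : ∀ᵐ p ∂(volume : Measure ℝ).prod (volume.restrict (Ioi (0 : ℝ))), 0 < p.2 :=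
    Measure.quasiMeasurePreserving_snd.ae (ae_restrict_mem measurableSet_Ioi)
  filter_upwards [hae] with p hp using hbound p.1 p.2 hp

lemma exists_vertical_dominant (hF : WeightedDecay s t F) (hs : 0 ≤ s) (hst : s + 2 < t) :
    ∃ g : ℝ → ℝ, IntegrableOn g (Ioi 0) ∧ ∀ x y : ℝ, 0 < y → ‖F ⟨x, y⟩‖ ≤ g y := by
  obtain ⟨C, r, hC, hr, hbound⟩ := hF.exists_product_bound hs hst
  refine ⟨fun y => C * (1 + ‖y‖) ^ (-r),
    ((integrable_one_add_norm (by simpa using hr)).const_mul C).integrableOn,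
    fun x y hy => (hbound x y hy).trans (mul_le_mul_of_nonneg_left ?_ hC)⟩
  refine mul_le_of_le_one_left (by positivity) (Real.rpow_le_one_of_one_le_of_nonpos ?_ ?_)
  · linarith [sq_nonneg ‖x‖]
  · linarith

lemma integrableOn_vertical (hF : WeightedDecay s t F) (hs : 0 ≤ s) (hst : s + 2 < t) (x : ℝ) :
    IntegrableOn (fun y : ℝ => F ⟨x, y⟩) (Ioi 0) := by
  obtain ⟨g, hg, hbound⟩ := hF.exists_vertical_dominant hs hst
  refine hg.mono'
    ((continuousOn_vertical hF.continuousOn x).aestronglyMeasurable measurableSet_Ioi) ?_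
  filter_upwards [ae_restrict_mem measurableSet_Ioi] with y hy using hbound x y hy

lemma integrable_horizontal (hF : WeightedDecay s t F) (hs : 0 ≤ s) (hst : s + 2 < t) {y : ℝ}
    (hy : 0 < y) : Integrable fun x : ℝ => F ⟨x, y⟩ := by
  obtain ⟨C, r, -, hr, hbound⟩ := hF.exists_product_bound hs hst
  have hx : Integrable fun x : ℝ => (1 + ‖x‖ ^ 2) ^ (-r / 2) :=
    integrable_rpow_neg_one_add_norm_sq (by simpa using hr)
  exact ((hx.mul_const ((1 + ‖y‖) ^ (-r))).const_mul C).mono'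
    (continuous_horizontal hF.continuousOn hy).aestronglyMeasurable
    (Eventually.of_forall fun x => hbound x y hy)

lemma exists_norm_bound (hF : WeightedDecay s t F) (hs : 0 ≤ s) (hst : s ≤ t) :
    ∃ B, ∀ z ∈ upperHalfPlaneSet, ‖F z‖ ≤ B := by
  obtain ⟨C, hC0, hC⟩ := hF.exists_bound_nonneg
  refine ⟨C, fun z hz => (hC z hz).trans (mul_le_of_le_one_right hC0 ?_)⟩
  have hz' : 0 < z.im := hz
  have him := one_add_le_norm_mk_add_I z.re hz'
  have habs := Real.le_norm_self z.im
  calc z.im ^ s * ‖z + Complex.I‖ ^ (-t)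
      ≤ ‖z + Complex.I‖ ^ s * ‖z + Complex.I‖ ^ (-t) := by
        gcongr
        linarith
    _ ≤ 1 := by
        rw [← Real.rpow_add (norm_add_I_pos hz)]
        exact Real.rpow_le_one_of_one_le_of_nonpos (by linarith [norm_nonneg z.im]) (by linarith)

lemma tendsto_cocompact (hF : WeightedDecay s t F) (hs : 0 ≤ s) (hst : s < t) :
    Tendsto F (cocompact ℂ ⊓ 𝓟 upperHalfPlaneSet) (𝓝 0) := by
  obtain ⟨C, hC0, hC⟩ := hF.exists_bound_nonneg
  have hnorm : Tendsto (fun z : ℂ => ‖z + Complex.I‖) (cocompact ℂ) atTop :=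
    tendsto_norm_cocompact_atTop.comp
      (Homeomorph.addRight Complex.I).isClosedEmbedding.tendsto_cocompact
  have hlim := ((tendsto_rpow_neg_atTop (sub_pos.2 hst)).comp hnorm).const_mul C
  rw [mul_zero] at hlim
  refine squeeze_zero_norm' ?_ (hlim.mono_left inf_le_left)
  filter_upwards [mem_inf_of_right (mem_principal_self upperHalfPlaneSet)] with z hz
  have hz' : 0 < z.im := hz
  have him : z.im ≤ ‖z + Complex.I‖ := by
    linarith [one_add_le_norm_mk_add_I z.re hz', Real.le_norm_self z.im]
  refine (hC z hz).trans ?_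
  rw [Function.comp_apply, neg_sub, sub_eq_add_neg, Real.rpow_add (norm_add_I_pos hz)]
  gcongr

lemma tendsto_vertical_zero (hF : WeightedDecay s t F) (hs : 0 < s) (ht : 0 ≤ t) (x : ℝ) :
    Tendsto (fun y : ℝ => F ⟨x, y⟩) (𝓝[>] 0) (𝓝 0) := by
  obtain ⟨C, hC0, hC⟩ := hF.exists_bound_nonneg
  have hlim : Tendsto (fun y : ℝ => C * y ^ s) (𝓝[>] 0) (𝓝 0) := by
    have h := (Real.continuousAt_rpow_const 0 s (Or.inr hs.le)).tendsto.const_mul C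
    rw [Real.zero_rpow hs.ne', mul_zero] at h
    exact h.mono_left nhdsWithin_le_nhds
  refine squeeze_zero_norm' ?_ hlim
  filter_upwards [self_mem_nhdsWithin] with y (hy : 0 < y)
  refine (hC ⟨x, y⟩ hy).trans ?_
  gcongr
  refine mul_le_of_le_one_right (by positivity) (Real.rpow_le_one_of_one_le_of_nonpos ?_ (by simpa))
  linarith [one_add_le_norm_mk_add_I x hy, norm_nonneg y]

lemma integrable_marginal (hF : WeightedDecay s t F) (hs : 0 ≤ s) (hst : s + 2 < t) :
    Integrable fun x : ℝ => ∫ y in Ioi (0 : ℝ), F ⟨x, y⟩ :=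
  (integrableOn_upperHalfPlaneSet_iff.1 (hF.integrableOn hs hst)).integral_prod_left

lemma continuous_marginal (hF : WeightedDecay s t F) (hs : 0 ≤ s) (hst : s + 2 < t) {S : Set ℝ}
    (hS : MeasurableSet S) (hSI : S ⊆ Ioi 0) : Continuous fun x : ℝ => ∫ y in S, F ⟨x, y⟩ := by
  obtain ⟨g, hg, hbound⟩ := hF.exists_vertical_dominant hs hst
  refine continuous_of_dominated
    (fun x => ((hF.integrableOn_vertical hs hst x).mono_set hSI).aestronglyMeasurable)
    (fun x => ?_) (hg.mono_set hSI) ?_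
  · filter_upwards [ae_restrict_mem hS] with y hy using hbound x y (hSI hy)
  · filter_upwards [ae_restrict_mem hS] with y hy
    exact continuous_horizontal hF.continuousOn (hSI hy)

lemma exists_marginal_bound (hF : WeightedDecay s t F) (hs : 0 ≤ s) (hst : s + 2 < t) :
    ∃ B, ∀ x : ℝ, ‖∫ y in Ioi (0 : ℝ), F ⟨x, y⟩‖ ≤ B := by
  obtain ⟨g, hg, hbound⟩ := hF.exists_vertical_dominant hs hst
  refine ⟨∫ y in Ioi 0, g y, fun x => norm_integral_le_of_norm_le hg ?_⟩
  filter_upwards [ae_restrict_mem measurableSet_Ioi] with y hy using hbound x y hy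

lemma hasDerivAt_marginal {F' : ℂ → ℝ} {s' t' : ℝ} (hF : WeightedDecay s t F) (hs : 0 ≤ s)
    (hst : s + 2 < t) (hF' : WeightedDecay s' t' F') (hs' : 0 ≤ s') (hst' : s' + 2 < t')
    (hderiv : ∀ x y : ℝ, 0 < y → HasDerivAt (fun x' : ℝ => F ⟨x', y⟩) (F' ⟨x, y⟩) x) (x : ℝ) :
    HasDerivAt (fun x' : ℝ => ∫ y in Ioi (0 : ℝ), F ⟨x', y⟩)
      (∫ y in Ioi (0 : ℝ), F' ⟨x, y⟩) x := by
  obtain ⟨g, hg, hbound⟩ := hF'.exists_vertical_dominant hs' hst'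
  refine (hasDerivAt_integral_of_dominated_loc_of_deriv_le (bound := g)
    (F' := fun x' y => F' ⟨x', y⟩) univ_mem
    (Eventually.of_forall fun x' => (hF.integrableOn_vertical hs hst x').aestronglyMeasurable)
    (hF.integrableOn_vertical hs hst x)
    (hF'.integrableOn_vertical hs' hst' x).aestronglyMeasurable ?_ hg ?_).2
  · filter_upwards [ae_restrict_mem measurableSet_Ioi] with y hy x' _ using hbound x' y hy
  · filter_upwards [ae_restrict_mem measurableSet_Ioi] with y hy x' _ using hderiv x' y hy

lemma integral_horizontal_deriv_eq_zero {G : ℂ → ℝ} {s' t' : ℝ} (hF : WeightedDecay s t F)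
    (hs : 0 ≤ s) (hst : s + 2 < t) (hG : WeightedDecay s' t' G) (hs' : 0 ≤ s')
    (hst' : s' + 2 < t')
    (hderiv : ∀ x y : ℝ, 0 < y → HasDerivAt (fun x' : ℝ => G ⟨x', y⟩) (F ⟨x, y⟩) x) :
    ∫ z in upperHalfPlaneSet, F z = 0 := by
  rw [setIntegral_upperHalfPlaneSet_symm (hF.integrableOn hs hst)]
  exact setIntegral_eq_zero_of_forall_eq_zero fun y hy =>
    integral_eq_zero_of_hasDerivAt_of_integrable (fun x => hderiv x y hy)
      (hF.integrable_horizontal hs hst hy) (hG.integrable_horizontal hs' hst' hy)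

lemma integral_vertical_deriv_eq_zero {G : ℂ → ℝ} {s' t' : ℝ} (hF : WeightedDecay s t F)
    (hs : 0 ≤ s) (hst : s + 2 < t) (hG : WeightedDecay s' t' G) (hs' : 0 < s') (hst' : s' < t')
    (hderiv : ∀ x y : ℝ, 0 < y → HasDerivAt (fun y' : ℝ => G ⟨x, y'⟩) (F ⟨x, y⟩) y) :
    ∫ z in upperHalfPlaneSet, F z = 0 := by
  rw [setIntegral_upperHalfPlaneSet (hF.integrableOn hs hst)]
  refine integral_eq_zero_of_ae (Eventually.of_forall fun x => ?_)
  have hone (y : ℝ) (_ : y ∈ Ioi (0 : ℝ)) : HasDerivAt (fun _ : ℝ => (1 : ℝ)) 0 y :=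
    hasDerivAt_const y 1
  have hparts := integral_Ioi_deriv_mul_eq_sub (fun y hy => hderiv x y hy) hone
    (a' := 0) (b' := 0)
    (by simpa [Pi.mul_def, Pi.add_def] using hF.integrableOn_vertical hs hst x)
    (by simpa [Pi.mul_def] using hG.tendsto_vertical_zero hs' (hs'.trans hst').le x)
    (by simpa [Pi.mul_def, Function.comp_def] using
      (hG.tendsto_cocompact hs'.le hst').comp (tendsto_mk_atTop x))
  change ∫ y in Ioi (0 : ℝ), F ⟨x, y⟩ = 0
  simpa only [mul_one, mul_zero, add_zero, sub_zero] using hparts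

end WeightedDecay

end DecayConsequences

section DerivativeNormIdentity

open Set UpperHalfPlane

lemma WeightedDecay.of_add {E : Type*} [NormedAddCommGroup E] {s t r : ℝ} {F : ℂ → E}
    (hF : WeightedDecay (s + r) (t + r) F) (hr : 0 ≤ r) : WeightedDecay s t F := by
  obtain ⟨C, hC0, hC⟩ := hF.exists_bound_nonneg
  refine ⟨hF.continuousOn, C, fun z hz => (hC z hz).trans ?_⟩
  have hz' : 0 < z.im := hz
  have hN := norm_add_I_pos hz
  have him : z.im ≤ ‖z + Complex.I‖ := by
    linarith [one_add_le_norm_mk_add_I z.re hz', Real.le_norm_self z.im]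
  have hratio : z.im ^ r * ‖z + Complex.I‖ ^ (-r) ≤ 1 := by
    rw [Real.rpow_neg hN.le, ← div_eq_mul_inv, div_le_one (by positivity)]
    gcongr
  rw [Real.rpow_add hz', neg_add, Real.rpow_add hN]
  calc C * (z.im ^ s * z.im ^ r * (‖z + Complex.I‖ ^ (-t) * ‖z + Complex.I‖ ^ (-r)))
      = C * (z.im ^ s * ‖z + Complex.I‖ ^ (-t)) * (z.im ^ r * ‖z + Complex.I‖ ^ (-r)) := by ring
    _ ≤ C * (z.im ^ s * ‖z + Complex.I‖ ^ (-t)) :=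
        mul_le_of_le_one_right (by positivity) hratio

lemma hasDerivAt_mk_left (x y : ℝ) : HasDerivAt (fun x' : ℝ => (⟨x', y⟩ : ℂ)) 1 x := by
  simpa only [Complex.mk_eq_add_mul_I, Complex.ofReal_one] using
    (hasDerivAt_id' x).ofReal_comp.add_const (y * Complex.I)

lemma hasDerivAt_mk_right (x y : ℝ) : HasDerivAt (fun y' : ℝ => (⟨x, y'⟩ : ℂ)) Complex.I y := by
  simpa only [Complex.mk_eq_add_mul_I, Complex.ofReal_one, one_mul] using
    ((hasDerivAt_id' y).ofReal_comp.mul_const Complex.I).const_add (x : ℂ)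

lemma hasDerivAt_comp_mk_left {Ψ : ℂ → ℂ} {Ψ' : ℂ} {x y : ℝ} (h : HasDerivAt Ψ Ψ' ⟨x, y⟩) :
    HasDerivAt (fun x' : ℝ => Ψ ⟨x', y⟩) Ψ' x := by
  simpa only [mul_one] using! h.comp x (hasDerivAt_mk_left x y)

lemma hasDerivAt_comp_mk_right {Ψ : ℂ → ℂ} {Ψ' : ℂ} {x y : ℝ} (h : HasDerivAt Ψ Ψ' ⟨x, y⟩) :
    HasDerivAt (fun y' : ℝ => Ψ ⟨x, y'⟩) (Ψ' * Complex.I) y :=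
  h.comp y (hasDerivAt_mk_right x y)

/-- `Ψ` is holomorphic on the upper half plane with derivative `Ψ'`, is `O(|z + i| ^ (-n))`, and
its derivative decays one order faster. -/
structure HolomorphicDecay (n : ℝ) (Ψ Ψ' : ℂ → ℂ) : Prop where
  decay : WeightedDecay 0 n Ψ
  decay_deriv : WeightedDecay 0 (n + 1) Ψ'
  hasDerivAt : ∀ z ∈ upperHalfPlaneSet, HasDerivAt Ψ (Ψ' z) z

variable {n : ℝ} {Ψ Ψ' Ψ'' : ℂ → ℂ}

lemma integral_im_rpow_mul_inner_second_deriv (hn : 1 < n)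
    (hΨ : HolomorphicDecay n Ψ Ψ') (hΨ' : HolomorphicDecay (n + 1) Ψ' Ψ'') :
    ∫ z in upperHalfPlaneSet, z.im ^ n * (inner ℝ (Ψ z) (Ψ'' z) + ‖Ψ' z‖ ^ 2) = 0 := by
  have hF : WeightedDecay 0 (2 * n + 2) fun z => inner ℝ (Ψ z) (Ψ'' z) + ‖Ψ' z‖ ^ 2 := by
    refine WeightedDecay.add ?_ ?_
    · convert hΨ.decay.real_inner hΨ'.decay_deriv using 1 <;> ring
    · convert hΨ'.decay.norm_sq using 1 <;> ring
  have hG : WeightedDecay 0 (2 * n + 1) fun z => inner ℝ (Ψ z) (Ψ' z) := by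
    convert hΨ.decay.real_inner hΨ'.decay using 1 <;> ring
  refine (hF.im_rpow_mul n).integral_horizontal_deriv_eq_zero (by linarith) (by linarith)
    (hG.im_rpow_mul n) (by linarith) (by linarith) fun x y hy => ?_
  have hprod := ((hasDerivAt_comp_mk_left (hΨ.hasDerivAt ⟨x, y⟩ hy)).inner ℝ
    (hasDerivAt_comp_mk_left (hΨ'.hasDerivAt ⟨x, y⟩ hy))).const_mul (y ^ n)
  rwa [real_inner_self_eq_norm_sq] at hprod

lemma integral_im_rpow_mul_norm_deriv_sq_sub (hn : 2 ≤ n)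
    (hΨ : HolomorphicDecay n Ψ Ψ') (hΨ' : HolomorphicDecay (n + 1) Ψ' Ψ'') :
    ∫ z in upperHalfPlaneSet, (z.im ^ n * (‖Ψ' z‖ ^ 2 - inner ℝ (Ψ z) (Ψ'' z))
      - n * (n - 1) / 2 * (z.im ^ (n - 2) * ‖Ψ z‖ ^ 2)) = 0 := by
  have hF₁ : WeightedDecay 0 (2 * n + 2) fun z => ‖Ψ' z‖ ^ 2 - inner ℝ (Ψ z) (Ψ'' z) := by
    refine WeightedDecay.sub ?_ ?_
    · convert hΨ'.decay.norm_sq using 1 <;> ring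
    · convert hΨ.decay.real_inner hΨ'.decay_deriv using 1 <;> ring
  have hsq : WeightedDecay 0 (2 * n) fun z => ‖Ψ z‖ ^ 2 := by
    convert hΨ.decay.norm_sq using 1 <;> ring
  have hG₁ : WeightedDecay 0 (2 * n + 1) fun z => inner ℝ (Ψ z) (Ψ' z * Complex.I) := by
    have hI := hΨ'.decay.of_norm_le (G := fun z => Ψ' z * Complex.I)
      (hΨ'.decay.continuousOn.mul continuousOn_const) zero_le_one fun z _ => by simp
    convert hΨ.decay.real_inner hI using 1 <;> ring
  have hF := WeightedDecay.sub (WeightedDecay.of_add (s := n - 2) (t := 2 * n) (r := 2)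
    (by simpa only [sub_add_cancel] using hF₁.im_rpow_mul n) two_pos.le)
    ((hsq.im_rpow_mul (n - 2)).const_mul (n * (n - 1) / 2))
  have hG := WeightedDecay.sub (WeightedDecay.of_add (s := n - 1) (t := 2 * n) (r := 1)
    (by simpa only [sub_add_cancel] using hG₁.im_rpow_mul n) one_pos.le)
    ((hsq.im_rpow_mul (n - 1)).const_mul (n / 2))
  refine hF.integral_vertical_deriv_eq_zero (by linarith) (by linarith) hG (by linarith)
    (by linarith) fun x y hy => ?_
  have hΨd := hasDerivAt_comp_mk_right (hΨ.hasDerivAt ⟨x, y⟩ hy)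
  have hΨd' := (hasDerivAt_comp_mk_right (hΨ'.hasDerivAt ⟨x, y⟩ hy)).mul_const Complex.I
  have hpow (p : ℝ) := Real.hasDerivAt_rpow_const (x := y) (p := p) (Or.inl hy.ne')
  have hderiv := ((hpow n).mul (hΨd.inner ℝ hΨd')).sub
    (((hpow (n - 1)).mul hΨd.norm_sq).const_mul (n / 2))
  refine hderiv.congr_deriv ?_
  rw [mul_assoc (Ψ'' _), Complex.I_mul_I, mul_neg_one, inner_neg_right,
    real_inner_self_eq_norm_sq, norm_mul, Complex.norm_I, mul_one,
    show n - 1 - 1 = n - 2 by ring]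
  ring

lemma integral_im_rpow_mul_norm_deriv_sq (hn : 2 ≤ n)
    (hΨ : HolomorphicDecay n Ψ Ψ') (hΨ' : HolomorphicDecay (n + 1) Ψ' Ψ'') :
    ∫ z in upperHalfPlaneSet, z.im ^ n * ‖Ψ' z‖ ^ 2 =
      n * (n - 1) / 4 * ∫ z in upperHalfPlaneSet, z.im ^ (n - 2) * ‖Ψ z‖ ^ 2 := by
  have hinner : IntegrableOn (fun z => z.im ^ n * inner ℝ (Ψ z) (Ψ'' z)) upperHalfPlaneSet := by
    have h : WeightedDecay 0 (n + (n + 1 + 1)) fun z => inner ℝ (Ψ z) (Ψ'' z) := by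
      simpa only [add_zero] using hΨ.decay.real_inner hΨ'.decay_deriv
    exact (h.im_rpow_mul n).integrableOn (by linarith) (by linarith)
  have hderiv : IntegrableOn (fun z => z.im ^ n * ‖Ψ' z‖ ^ 2) upperHalfPlaneSet := by
    have h : WeightedDecay 0 (n + 1 + (n + 1)) fun z => ‖Ψ' z‖ ^ 2 := by
      simpa only [add_zero] using hΨ'.decay.norm_sq
    exact (h.im_rpow_mul n).integrableOn (by linarith) (by linarith)
  have hsq : IntegrableOn (fun z => z.im ^ (n - 2) * ‖Ψ z‖ ^ 2) upperHalfPlaneSet := by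
    have h : WeightedDecay 0 (n + n) fun z => ‖Ψ z‖ ^ 2 := by
      simpa only [add_zero] using hΨ.decay.norm_sq
    exact (h.im_rpow_mul (n - 2)).integrableOn (by linarith) (by linarith)
  have hadd := integral_im_rpow_mul_inner_second_deriv (by linarith) hΨ hΨ'
  have hsub := integral_im_rpow_mul_norm_deriv_sq_sub hn hΨ hΨ'
  simp only [mul_add] at hadd
  simp only [mul_sub (_ ^ n)] at hsub
  rw [integral_add hinner hderiv] at hadd
  rw [integral_sub (by exact hderiv.sub hinner) (hsq.const_mul _), integral_sub hderiv hinner,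
    integral_const_mul] at hsub
  linarith

end DerivativeNormIdentity

section HalfPlaneTransport

open Set Filter Topology UpperHalfPlane

/-- The weight `(im z) ^ s * |z + i| ^ (-t)` on the upper half plane, whose restrictions to boxes
are the target densities of the transport. -/
noncomputable def powerWeight (s t : ℝ) (z : ℂ) : ℝ := z.im ^ s * ‖z + Complex.I‖ ^ (-t)

lemma powerWeight_pos {s t : ℝ} {z : ℂ} (hz : z ∈ upperHalfPlaneSet) : 0 < powerWeight s t z :=
  mul_pos (Real.rpow_pos_of_pos hz s) (Real.rpow_pos_of_pos (norm_add_I_pos hz) _)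

lemma weightedDecay_powerWeight (s t : ℝ) : WeightedDecay s t (powerWeight s t) where
  continuousOn := by
    refine ContinuousOn.mul ?_ ?_
    · exact Complex.continuous_im.continuousOn.rpow_const fun z hz => Or.inl (ne_of_gt hz)
    · exact (by fun_prop : Continuous fun z => ‖z + Complex.I‖).continuousOn.rpow_const
        fun z hz => Or.inl (norm_add_I_pos hz).ne'
  bound := ⟨1, fun z hz => by
    rw [one_mul, Real.norm_of_nonneg (powerWeight_pos hz).le, powerWeight]⟩

lemma powerWeight_eq_norm_sq_mul {s t : ℝ} {z : ℂ} (hz : z ∈ upperHalfPlaneSet) :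
    powerWeight s t z = ‖z + Complex.I‖ ^ 2 * powerWeight s (t + 2) z := by
  have hN := norm_add_I_pos hz
  rw [powerWeight, powerWeight, mul_left_comm, ← Real.rpow_natCast, ← Real.rpow_add hN]
  congr 2
  push_cast
  ring

lemma isMassDensity_powerWeight {s t R τ : ℝ} (hs : 0 ≤ s) (hst : s + 2 < t) (hτ : 0 < τ) (ξ : ℝ) :
    IsMassDensity (Ioo 0 R) fun η => τ * powerWeight s t ⟨ξ, η⟩ :=
  have hdecay := (weightedDecay_powerWeight s t).const_mul τ
  isMassDensity_of_pos ((continuousOn_vertical hdecay.continuousOn ξ).mono Ioo_subset_Ioi_self)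
    ((hdecay.integrableOn_vertical hs hst ξ).mono_set Ioo_subset_Ioi_self)
    fun _ hη => mul_pos hτ (powerWeight_pos hη.1)

/-- The box `(-R, R) × (0, R)` in the upper half plane. -/
def upperBox (R : ℝ) : Set ℂ := Ioo (-R) R ×ℂ Ioo 0 R

lemma upperBox_subset {R : ℝ} : upperBox R ⊆ upperHalfPlaneSet := fun _ hz => hz.2.1

lemma setIntegral_upperBox {R : ℝ} {F : ℂ → ℝ} (hF : IntegrableOn F upperHalfPlaneSet) :
    ∫ z in upperBox R, F z = ∫ x in Ioo (-R) R, ∫ y in Ioo 0 R, F ⟨x, y⟩ :=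
  setIntegral_reProdIm measurableSet_Ioo measurableSet_Ioo (hF.mono_set upperBox_subset)

lemma tendsto_setIntegral_upperBox {F : ℂ → ℝ} (hF : IntegrableOn F upperHalfPlaneSet) :
    Tendsto (fun R => ∫ z in upperBox R, F z) atTop (𝓝 (∫ z in upperHalfPlaneSet, F z)) := by
  have hunion : ⋃ R, upperBox R = upperHalfPlaneSet := by
    refine Subset.antisymm (iUnion_subset fun _ => upperBox_subset) fun z hz => ?_
    refine mem_iUnion.2 ⟨|z.re| + z.im + 1, abs_lt.1 ?_, hz, ?_⟩
    all_goals linarith [show 0 < z.im from hz, abs_nonneg z.re]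
  rw [← hunion] at hF ⊢
  refine tendsto_setIntegral_of_monotone
    (fun R => (isOpen_Ioo.reProdIm isOpen_Ioo).measurableSet) (fun R R' hR => ?_) hF
  exact inter_subset_inter (preimage_mono (Ioo_subset_Ioo (neg_le_neg hR) hR))
    (preimage_mono (Ioo_subset_Ioo le_rfl hR))

/-- AM–GM for the eigenvalues `τ₁`, `τ₂` of the derivative of a triangular transport map and for
`η / y` with weight `n`; here `η` is the height of the image point and `N` its distance to `-i`. -/
lemma transport_arith_mean {n u y N τ₁ τ₂ η : ℝ} (hn : 0 < n) (hu : 0 ≤ u) (hy : 0 < y)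
    (hN : 0 < N) (hτ₁ : 0 ≤ τ₁) (hτ₂ : 0 ≤ τ₂) (hη : 0 ≤ η)
    (h : y ^ n * u ^ ((n + 2) / (n + 1)) = τ₁ * τ₂ * (η ^ n * N ^ (-(2 * n + 4)))) :
    (n + 2) * (N ^ 2 * (y ^ n * u ^ ((n + 2) / (n + 1)))) ≤
      y ^ n * u * (τ₁ + τ₂) + n * (y ^ (n - 1) * u * η) := by
  have hn2 : 0 < n + 2 := by linarith
  have hn1 : 0 < n + 1 := by linarith
  have hmean := Real.geom_mean_le_arith_mean3_weighted (w₁ := 1 / (n + 2)) (w₂ := 1 / (n + 2))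
    (w₃ := n / (n + 2)) (by positivity) (by positivity) (by positivity) hτ₁ hτ₂
    (div_nonneg hη hy.le) (by field_simp; ring)
  have hprod : τ₁ * τ₂ * (η / y) ^ n = N ^ (2 * n + 4) * u ^ ((n + 2) / (n + 1)) := by
    rw [Real.div_rpow hη hy.le]
    rw [Real.rpow_neg hN.le] at h
    field_simp at h ⊢
    linarith
  have hgeom : τ₁ ^ (1 / (n + 2)) * τ₂ ^ (1 / (n + 2)) * (η / y) ^ (n / (n + 2)) =
      N ^ 2 * u ^ (1 / (n + 1)) := by
    calc _ = (τ₁ * τ₂ * (η / y) ^ n) ^ (1 / (n + 2)) := by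
          rw [Real.mul_rpow (by positivity) (by positivity), Real.mul_rpow hτ₁ hτ₂,
            ← Real.rpow_mul (by positivity), mul_one_div]
      _ = _ := by
          rw [hprod, Real.mul_rpow (by positivity) (by positivity), ← Real.rpow_mul hN.le,
            ← Real.rpow_mul hu, ← Real.rpow_natCast]
          congr 2 <;> push_cast <;> field_simp
          ring
  have hu' : u ^ ((n + 2) / (n + 1)) = u * u ^ (1 / (n + 1)) := by
    rw [← Real.rpow_one_add' hu (by positivity)]
    congr 1
    field_simp
    ring
  have hy' : y ^ n = y ^ (n - 1) * y := by rw [← Real.rpow_add_one hy.ne', sub_add_cancel]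
  rw [hgeom] at hmean
  calc (n + 2) * (N ^ 2 * (y ^ n * u ^ ((n + 2) / (n + 1))))
      = (n + 2) * (y ^ n * u) * (N ^ 2 * u ^ (1 / (n + 1))) := by rw [hu']; ring
    _ ≤ (n + 2) * (y ^ n * u) *
        (1 / (n + 2) * τ₁ + 1 / (n + 2) * τ₂ + n / (n + 2) * (η / y)) := by gcongr
    _ = y ^ n * u * (τ₁ + τ₂) + n * (y ^ (n - 1) * u * η) := by
        rw [hy']
        field_simp

/-- A nonnegative function `u` on the upper half plane with partial derivatives `ux`, `uy`, whose
gradient satisfies the Young inequality needed to pair it with a transport map. The energy density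
`V` stands for a multiple of `|Ψ'|²` when `u` is a power of `|Ψ|`. -/
structure TransportControlled (n κ : ℝ) (u ux uy V : ℂ → ℝ) : Prop where
  nonneg : ∀ z, 0 ≤ u z
  exists_pos : ∀ x : ℝ, ∀ v > 0, ∀ w > v, ∃ y ∈ Icc v w, 0 < u ⟨x, y⟩
  decay : WeightedDecay 0 (2 * n + 2) u
  decay_fst : WeightedDecay 0 (2 * n + 3) ux
  decay_snd : WeightedDecay 0 (2 * n + 3) uy
  decay_energy : WeightedDecay 0 (2 * n + 2) V
  hasDerivAt_fst : ∀ x y : ℝ, 0 < y → HasDerivAt (fun x' : ℝ => u ⟨x', y⟩) (ux ⟨x, y⟩) x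
  hasDerivAt_snd : ∀ x y : ℝ, 0 < y → HasDerivAt (fun y' : ℝ => u ⟨x, y'⟩) (uy ⟨x, y⟩) y
  young : ∀ z ∈ upperHalfPlaneSet, ∀ a b : ℝ, -(ux z * a + uy z * b) ≤
    V z + κ * (u z ^ ((n + 2) / (n + 1)) * (a ^ 2 + b ^ 2))

namespace TransportControlled

variable {n κ R : ℝ} {u ux uy V : ℂ → ℝ}

lemma decay_density (h : TransportControlled n κ u ux uy V) (hn : 0 < n) :
    WeightedDecay n (2 * n + 4) fun z => z.im ^ n * u z ^ ((n + 2) / (n + 1)) := by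
  have hdecay := h.decay.norm_rpow (p := (n + 2) / (n + 1)) (by positivity)
  have hexp : (n + 2) / (n + 1) * (2 * n + 2) = 2 * n + 4 := by field_simp; ring
  simp only [mul_zero, hexp, Real.norm_of_nonneg (h.nonneg _)] at hdecay
  exact hdecay.im_rpow_mul n

lemma isMassDensity_vertical (h : TransportControlled n κ u ux uy V) (hn : 0 < n) (x : ℝ) :
    IsMassDensity (Ioi 0) fun y => y ^ n * u ⟨x, y⟩ ^ ((n + 2) / (n + 1)) where
  continuousOn := continuousOn_vertical (h.decay_density hn).continuousOn x
  integrableOn := (h.decay_density hn).integrableOn_vertical hn.le (by linarith) x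
  nonneg y (hy : 0 < y) := by
    have hu := h.nonneg ⟨x, y⟩
    positivity
  exists_pos v hv w _ hvw := by
    obtain ⟨y, hy, hpos⟩ := h.exists_pos x v hv w hvw
    have hy0 : 0 < y := (show 0 < v from hv).trans_le hy.1
    exact ⟨y, hy, by positivity⟩

lemma vertical_mass_pos (h : TransportControlled n κ u ux uy V) (hn : 0 < n) (x : ℝ) :
    0 < ∫ y in Ioi 0, y ^ n * u ⟨x, y⟩ ^ ((n + 2) / (n + 1)) :=
  (h.isMassDensity_vertical hn x).integral_pos isOpen_Ioi ordConnected_Ioi nonempty_Ioi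

lemma decay_im_rpow_mul (h : TransportControlled n κ u ux uy V) :
    WeightedDecay n (2 * n + 2) fun z => z.im ^ n * u z :=
  h.decay.im_rpow_mul n

lemma decay_vertical_deriv (h : TransportControlled n κ u ux uy V) :
    WeightedDecay (n - 1) (2 * n + 2)
      fun z => z.im ^ n * uy z + n * (z.im ^ (n - 1) * u z) := by
  have hsnd : WeightedDecay (n - 1) (2 * n + 2) fun z => z.im ^ n * uy z :=
    .of_add (r := 1) (by convert h.decay_snd.im_rpow_mul n using 1 <;> ring) zero_le_one
  exact hsnd.add ((h.decay.im_rpow_mul (n - 1)).const_mul n)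

variable {x ξ τ : ℝ} {T T' : ℝ → ℝ}

lemma vertical_parts (h : TransportControlled n κ u ux uy V) (hn : 1 ≤ n) {a b : ℝ → ℝ}
    (hT : IsTransport (Ioi 0) (Ioo 0 R) a b T T') :
    IntegrableOn (fun y => (y ^ n * uy ⟨x, y⟩ + n * (y ^ (n - 1) * u ⟨x, y⟩)) * (T y + 1) +
      y ^ n * u ⟨x, y⟩ * T' y) (Ioi 0) ∧
    ∫ y in Ioi 0, ((y ^ n * uy ⟨x, y⟩ + n * (y ^ (n - 1) * u ⟨x, y⟩)) * (T y + 1) +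
      y ^ n * u ⟨x, y⟩ * T' y) = 0 := by
  obtain ⟨B, hB⟩ := h.decay_im_rpow_mul.exists_norm_bound (by linarith) (by linarith)
  refine hT.integral_Ioi_deriv_mul_add (isBounded_Ioo 0 R) (fun y hy => ?_)
    (h.decay_vertical_deriv.integrableOn_vertical (by linarith) (by linarith) x)
    ⟨B, fun y hy => hB ⟨x, y⟩ hy⟩
    (h.decay_im_rpow_mul.tendsto_vertical_zero (by linarith) (by linarith) x)
    ((h.decay_im_rpow_mul.tendsto_cocompact (by linarith) (by linarith)).comp
      (tendsto_mk_atTop x)) 1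
  have hpow : HasDerivAt (fun y : ℝ => y ^ n) (n * y ^ (n - 1)) y :=
    Real.hasDerivAt_rpow_const (Or.inl (ne_of_gt hy))
  exact (hpow.mul (h.hasDerivAt_snd x y hy)).congr_deriv (by ring)

lemma vertical_pointwise (h : TransportControlled n κ u ux uy V) (hn : 0 < n) (hτ : 0 < τ)
    (hT : IsTransport (Ioi 0) (Ioo 0 R) (fun y => y ^ n * u ⟨x, y⟩ ^ ((n + 2) / (n + 1)))
      (fun η => τ * powerWeight n (2 * n + 4) ⟨ξ, η⟩) T T') {y : ℝ} (hy : 0 < y) :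
    (n + 2) * (τ * (T' y * powerWeight n (2 * n + 2) ⟨ξ, T y⟩)) +
        n * (y ^ (n - 1) * u ⟨x, y⟩) ≤
      τ * (y ^ n * u ⟨x, y⟩) + ξ * (y ^ n * ux ⟨x, y⟩) + y ^ n * V ⟨x, y⟩ +
        κ * (τ * (T' y * powerWeight n (2 * n + 2) ⟨ξ, T y⟩)) +
        ((y ^ n * uy ⟨x, y⟩ + n * (y ^ (n - 1) * u ⟨x, y⟩)) * (T y + 1) +
          y ^ n * u ⟨x, y⟩ * T' y) := by
  have hTy : 0 < T y := (hT.mapsTo hy).1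
  have hmem : (⟨ξ, T y⟩ : ℂ) ∈ upperHalfPlaneSet := hTy
  have hdensity := hT.density_eq y hy
  have hN : ‖(⟨ξ, T y⟩ : ℂ) + Complex.I‖ ^ 2 = ξ ^ 2 + (T y + 1) ^ 2 := by
    rw [← Complex.normSq_eq_norm_sq, Complex.normSq_apply]
    simp only [Complex.add_re, Complex.add_im, Complex.I_re, Complex.I_im]
    ring
  have hweight : τ * (T' y * powerWeight n (2 * n + 2) ⟨ξ, T y⟩) =
      ‖(⟨ξ, T y⟩ : ℂ) + Complex.I‖ ^ 2 * (y ^ n * u ⟨x, y⟩ ^ ((n + 2) / (n + 1))) := by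
    rw [powerWeight_eq_norm_sq_mul hmem, hdensity]
    ring_nf
  have hmean := transport_arith_mean (τ₁ := τ) (τ₂ := T' y) (η := T y) hn (h.nonneg ⟨x, y⟩) hy
    (norm_add_I_pos hmem) hτ.le (hT.deriv_nonneg y hy) hTy.le
    (by rw [hdensity, powerWeight]; ring)
  have hyoung := mul_le_mul_of_nonneg_left (h.young ⟨x, y⟩ hy ξ (T y + 1))
    (Real.rpow_nonneg hy.le n)
  rw [← hN] at hyoung
  rw [hweight]
  linarith

lemma exists_vertical_transport (h : TransportControlled n κ u ux uy V) (hn : 0 < n)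
    (hτ : 0 < τ) (hmass : ∫ y in Ioi 0, y ^ n * u ⟨x, y⟩ ^ ((n + 2) / (n + 1)) =
      τ * ∫ η in Ioo 0 R, powerWeight n (2 * n + 4) ⟨ξ, η⟩) :
    ∃ T T', IsTransport (Ioi 0) (Ioo 0 R) (fun y => y ^ n * u ⟨x, y⟩ ^ ((n + 2) / (n + 1)))
      (fun η => τ * powerWeight n (2 * n + 4) ⟨ξ, η⟩) T T' :=
  exists_isTransport isOpen_Ioi ordConnected_Ioi (h.isMassDensity_vertical hn x) isOpen_Ioo
    ordConnected_Ioo (isMassDensity_powerWeight hn.le (by linarith) hτ ξ)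
    (fun _ hη => mul_pos hτ (powerWeight_pos hη.1)) (by rw [hmass, integral_const_mul])

lemma vertical_slice (h : TransportControlled n κ u ux uy V) (hn : 1 ≤ n) (hτ : 0 < τ)
    (hmass : ∫ y in Ioi 0, y ^ n * u ⟨x, y⟩ ^ ((n + 2) / (n + 1)) =
      τ * ∫ η in Ioo 0 R, powerWeight n (2 * n + 4) ⟨ξ, η⟩) :
    (n + 2 - κ) * (τ * ∫ η in Ioo 0 R, powerWeight n (2 * n + 2) ⟨ξ, η⟩) +
        n * (∫ y in Ioi 0, y ^ (n - 1) * u ⟨x, y⟩) ≤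
      τ * (∫ y in Ioi 0, y ^ n * u ⟨x, y⟩) + ξ * (∫ y in Ioi 0, y ^ n * ux ⟨x, y⟩) +
        ∫ y in Ioi 0, y ^ n * V ⟨x, y⟩ := by
  obtain ⟨T, T', hT⟩ := h.exists_vertical_transport (by linarith) hτ hmass
  have hK : IntegrableOn (fun η => powerWeight n (2 * n + 2) ⟨ξ, η⟩) (Ioo 0 R) :=
    ((weightedDecay_powerWeight n (2 * n + 2)).integrableOn_vertical (by linarith) (by linarith)
      ξ).mono_set Ioo_subset_Ioi_self
  have hG := (hT.integrableOn_deriv_mul_comp measurableSet_Ioi hK).const_mul τ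
  have hu := (h.decay.im_rpow_mul (n - 1)).integrableOn_vertical (by linarith) (by linarith) x
  have hW := h.decay_im_rpow_mul.integrableOn_vertical (by linarith) (by linarith) x
  have hux := (h.decay_fst.im_rpow_mul n).integrableOn_vertical (by linarith) (by linarith) x
  have hV := (h.decay_energy.im_rpow_mul n).integrableOn_vertical (by linarith) (by linarith) x
  obtain ⟨hparts_int, hparts⟩ := h.vertical_parts (x := x) hn hT
  have hlower := (((hW.const_mul τ).add (hux.const_mul ξ)).add hV).add (hG.const_mul κ)
  have hmono := setIntegral_mono_on ((hG.const_mul (n + 2)).add (hu.const_mul n))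
    (hlower.add hparts_int) measurableSet_Ioi
    fun y hy => h.vertical_pointwise (by linarith) hτ hT hy
  rw [integral_add' (hG.const_mul _) (hu.const_mul n), integral_add' hlower hparts_int, hparts,
    integral_add' (((hW.const_mul τ).add (hux.const_mul ξ)).add hV) (hG.const_mul κ),
    integral_add' ((hW.const_mul τ).add (hux.const_mul ξ)) hV,
    integral_add' (hW.const_mul τ) (hux.const_mul ξ)] at hmono
  simp only [integral_const_mul,
    hT.integral_deriv_mul_comp measurableSet_Ioi fun η => powerWeight n (2 * n + 2) ⟨ξ, η⟩]
    at hmono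
  linarith

lemma exists_horizontal_transport (h : TransportControlled n κ u ux uy V) (hn : 0 < n)
    (hR : 0 < R) (hmass : ∫ z in upperHalfPlaneSet, z.im ^ n * u z ^ ((n + 2) / (n + 1)) =
      ∫ z in upperBox R, powerWeight n (2 * n + 4) z) :
    ∃ T T', IsTransport univ (Ioo (-R) R)
      (fun x => ∫ y in Ioi 0, y ^ n * u ⟨x, y⟩ ^ ((n + 2) / (n + 1)))
      (fun ξ => ∫ η in Ioo 0 R, powerWeight n (2 * n + 4) ⟨ξ, η⟩) T T' := by
  have hρ := h.decay_density hn
  have hk := weightedDecay_powerWeight n (2 * n + 4)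
  have hkcont := hk.continuous_marginal hn.le (by linarith) measurableSet_Ioo
    (Ioo_subset_Ioi_self (a := R) (b := 0))
  have hkpos (ξ : ℝ) : 0 < ∫ η in Ioo 0 R, powerWeight n (2 * n + 4) ⟨ξ, η⟩ := by
    simpa only [one_mul] using (isMassDensity_powerWeight hn.le (by linarith) one_pos
      ξ).integral_pos isOpen_Ioo ordConnected_Ioo (nonempty_Ioo.2 hR)
  refine exists_isTransport isOpen_univ ordConnected_univ
    (isMassDensity_of_pos (hρ.continuous_marginal hn.le (by linarith) measurableSet_Ioi
      subset_rfl).continuousOn (hρ.integrable_marginal hn.le (by linarith)).integrableOn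
      fun x _ => h.vertical_mass_pos hn x) isOpen_Ioo ordConnected_Ioo
    (isMassDensity_of_pos hkcont.continuousOn
      (hkcont.integrableOn_Icc.mono_set Ioo_subset_Icc_self) fun ξ _ => hkpos ξ)
    (fun ξ _ => hkpos ξ) ?_
  rw [setIntegral_univ, ← setIntegral_upperBox (hk.integrableOn hn.le (by linarith)), ← hmass,
    setIntegral_upperHalfPlaneSet (hρ.integrableOn hn.le (by linarith))]

lemma energy_inequality (h : TransportControlled n κ u ux uy V) (hn : 1 ≤ n) (hR : 0 < R)
    (hmass : ∫ z in upperHalfPlaneSet, z.im ^ n * u z ^ ((n + 2) / (n + 1)) =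
      ∫ z in upperBox R, powerWeight n (2 * n + 4) z) :
    (n + 2 - κ) * (∫ z in upperBox R, powerWeight n (2 * n + 2) z) +
        n * (∫ z in upperHalfPlaneSet, z.im ^ (n - 1) * u z) ≤
      ∫ z in upperHalfPlaneSet, z.im ^ n * V z := by
  have hn0 : 0 < n := by linarith
  obtain ⟨X, X', hX⟩ := h.exists_horizontal_transport hn0 hR hmass
  have hX'pos (x : ℝ) : 0 < X' x := by
    refine (hX.deriv_nonneg x (mem_univ x)).lt_of_ne' fun hzero => ?_
    have hdensity := hX.density_eq x (mem_univ x)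
    rw [hzero, zero_mul] at hdensity
    exact (h.vertical_mass_pos hn0 x).ne' hdensity
  have hslice (x : ℝ) := h.vertical_slice hn (hX'pos x) (hX.density_eq x (mem_univ x))
  have hu := h.decay.im_rpow_mul (n - 1)
  have hux := h.decay_fst.im_rpow_mul n
  have hV := h.decay_energy.im_rpow_mul n
  have hK := weightedDecay_powerWeight n (2 * n + 2)
  obtain ⟨hparts_int, hparts⟩ := hX.integral_deriv_mul_add (isBounded_Ioo (-R) R)
    (h.decay_im_rpow_mul.hasDerivAt_marginal hn0.le (by linarith) hux hn0.le (by linarith)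
      fun x y hy => (h.hasDerivAt_fst x y hy).const_mul (y ^ n))
    (h.decay_im_rpow_mul.integrable_marginal hn0.le (by linarith))
    (hux.integrable_marginal hn0.le (by linarith))
    (h.decay_im_rpow_mul.exists_marginal_bound hn0.le (by linarith))
  have hKint := integrableOn_univ.1 <| hX.integrableOn_deriv_mul_comp .univ
    ((hK.continuous_marginal hn0.le (by linarith) measurableSet_Ioo
      (Ioo_subset_Ioi_self (a := R) (b := 0))).integrableOn_Icc.mono_set Ioo_subset_Icc_self)
  have hu_int := hu.integrable_marginal (by linarith) (by linarith)
  have hV_int := hV.integrable_marginal hn0.le (by linarith)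
  have hmono := integral_mono ((hKint.const_mul (n + 2 - κ)).add (hu_int.const_mul n))
    (hparts_int.add hV_int) fun x => (hslice x).trans (by simp only [Pi.add_apply]; linarith)
  rw [integral_add' (hKint.const_mul _) (hu_int.const_mul n), integral_add' hparts_int hV_int,
    hparts, zero_add, integral_const_mul, integral_const_mul, ← setIntegral_univ,
    hX.integral_deriv_mul_comp .univ fun ξ => ∫ η in Ioo 0 R, powerWeight n (2 * n + 2) ⟨ξ, η⟩,
    ← setIntegral_upperBox (hK.integrableOn hn0.le (by linarith)),
    ← setIntegral_upperHalfPlaneSet (hu.integrableOn (by linarith) (by linarith)),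
    ← setIntegral_upperHalfPlaneSet (hV.integrableOn hn0.le (by linarith))] at hmono
  exact hmono

end TransportControlled

end HalfPlaneTransport

section HolomorphicInequality

open Set Filter Topology UpperHalfPlane

lemma setIntegral_pos_of_continuousOn {U : Set ℂ} {F : ℂ → ℝ} (hU : IsOpen U)
    (hcont : ContinuousOn F U) (hint : IntegrableOn F U) (hnonneg : ∀ z ∈ U, 0 ≤ F z)
    (hpos : ∃ z ∈ U, 0 < F z) : 0 < ∫ z in U, F z := by
  have hopen : IsOpen (U ∩ F ⁻¹' Ioi 0) := hcont.isOpen_inter_preimage hU isOpen_Ioi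
  rw [setIntegral_pos_iff_support_of_nonneg_ae
    ((ae_restrict_iff' hU.measurableSet).2 (.of_forall hnonneg)) hint]
  refine (hopen.measure_pos volume hpos).trans_le (measure_mono fun z hz => ?_)
  exact ⟨ne_of_gt hz.2, hz.1⟩

lemma integrableOn_powerWeight {s t : ℝ} (hs : 0 ≤ s) (hst : s + 2 < t) :
    IntegrableOn (powerWeight s t) upperHalfPlaneSet :=
  (weightedDecay_powerWeight s t).integrableOn hs hst

lemma setIntegral_powerWeight_pos {s t R : ℝ} (hs : 0 ≤ s) (hst : s + 2 < t) (hR : 0 < R) :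
    0 < ∫ z in upperBox R, powerWeight s t z :=
  setIntegral_pos_of_continuousOn (isOpen_Ioo.reProdIm isOpen_Ioo)
    ((weightedDecay_powerWeight s t).continuousOn.mono upperBox_subset)
    ((integrableOn_powerWeight hs hst).mono_set upperBox_subset)
    (fun _ hz => (powerWeight_pos (upperBox_subset hz)).le)
    ⟨⟨0, R / 2⟩, ⟨⟨by simpa, by simpa⟩, by simpa, by simpa⟩,
      powerWeight_pos (show 0 < R / 2 by linarith)⟩

lemma exists_transport_slope {n b E : ℝ} (hn : 1 ≤ n) (hb : 0 < b) (hE : 0 < E) :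
    ∃ θ > 0, (1 + 1 / n) * θ * E - (n + 2 - (1 + 1 / n) / θ) * b ≤
      n * (b * (E / (n ^ 2 * b)) ^ (1 + 1 / n)) := by
  have : 0 < n := by linarith
  have hratio : 0 < E / (n ^ 2 * b) := by positivity
  set r := √(E / (n ^ 2 * b))
  have hr0 : 0 < r := Real.sqrt_pos.2 hratio
  have hrsq : r ^ 2 = E / (n ^ 2 * b) := Real.sq_sqrt hratio.le
  have hE' : E = n ^ 2 * b * r ^ 2 := by rw [hrsq]; field_simp
  have hbernoulli := one_add_mul_self_le_rpow_one_add (s := r - 1) (by linarith)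
    (p := 2 * (1 + 1 / n)) (by have : 0 < 1 / n := by positivity
                               linarith)
  rw [add_sub_cancel, Real.rpow_mul hr0.le, Real.rpow_two, hrsq] at hbernoulli
  -- `1 / (n * r) = √(b / E)` minimizes the left-hand side over `θ`
  refine ⟨1 / (n * r), by positivity, ?_⟩
  calc (1 + 1 / n) * (1 / (n * r)) * E - (n + 2 - (1 + 1 / n) / (1 / (n * r))) * b
      = n * (b * (1 + 2 * (1 + 1 / n) * (r - 1))) := by
        rw [hE']
        field_simp
        ring
    _ ≤ _ := by gcongr

lemma integral_im_rpow_mul_norm_const_mul (p q : ℝ) (c : ℂ) (G : ℂ → ℂ) :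
    ∫ z in upperHalfPlaneSet, z.im ^ q * (‖c * G z‖ ^ 2) ^ p =
      (‖c‖ ^ 2) ^ p * ∫ z in upperHalfPlaneSet, z.im ^ q * (‖G z‖ ^ 2) ^ p := by
  simp only [norm_mul, mul_pow, Real.mul_rpow (sq_nonneg ‖c‖) (sq_nonneg ‖G _‖),
    mul_left_comm _ ((‖c‖ ^ 2) ^ p), integral_const_mul]

lemma young_inner_mul_rpow {n θ : ℝ} (hn : 0 < n) (hθ : 0 < θ) (ψ ψ' : ℂ) (a b : ℝ) :
    -(2 * inner ℝ ψ ψ' * (1 + 1 / n) * (‖ψ‖ ^ 2) ^ (1 + 1 / n - 1) * a +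
        2 * inner ℝ ψ (ψ' * Complex.I) * (1 + 1 / n) * (‖ψ‖ ^ 2) ^ (1 + 1 / n - 1) * b) ≤
      (1 + 1 / n) * θ * ‖ψ'‖ ^ 2 +
        (1 + 1 / n) / θ * (((‖ψ‖ ^ 2) ^ (1 + 1 / n)) ^ ((n + 2) / (n + 1)) * (a ^ 2 + b ^ 2)) := by
  set q := (‖ψ‖ ^ 2) ^ (1 + 1 / n - 1) with hq
  have : 0 ≤ q := by positivity
  have hpow : ((‖ψ‖ ^ 2) ^ (1 + 1 / n)) ^ ((n + 2) / (n + 1)) = ‖ψ‖ ^ 2 * q ^ 2 := by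
    rw [hq, ← Real.rpow_mul (by positivity), ← Real.rpow_mul_natCast (by positivity),
      ← Real.rpow_one_add' (by positivity)
      (by simp only [one_div, add_sub_cancel_left]; positivity)]
    congr 1
    push_cast
    field_simp
    ring
  have hinner : inner ℝ ψ ψ' * a + inner ℝ ψ (ψ' * Complex.I) * b = inner ℝ ψ (ψ' * ⟨a, b⟩) := by
    simp only [Complex.inner, Complex.mul_re, Complex.mul_im, Complex.conj_re, Complex.conj_im,
      Complex.I_re, Complex.I_im]
    ring
  have hcauchy : -inner ℝ ψ (ψ' * ⟨a, b⟩) ≤ ‖ψ‖ * (‖ψ'‖ * ‖(⟨a, b⟩ : ℂ)‖) := by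
    rw [← norm_mul]
    exact (neg_le_abs _).trans (abs_real_inner_le_norm _ _)
  have hnorm : ‖(⟨a, b⟩ : ℂ)‖ ^ 2 = a ^ 2 + b ^ 2 := by
    rw [← Complex.normSq_eq_norm_sq, Complex.normSq_mk, sq, sq]
  set w := ‖(⟨a, b⟩ : ℂ)‖
  calc -(2 * inner ℝ ψ ψ' * (1 + 1 / n) * q * a +
          2 * inner ℝ ψ (ψ' * Complex.I) * (1 + 1 / n) * q * b)
      = (1 + 1 / n) * (2 * (q * -inner ℝ ψ (ψ' * ⟨a, b⟩))) := by rw [← hinner]; ring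
    _ ≤ (1 + 1 / n) * (2 * (q * (‖ψ‖ * (‖ψ'‖ * w)))) := by gcongr
    _ = (1 + 1 / n) * (2 * ‖ψ'‖ * (‖ψ‖ * q * w)) := by ring
    _ ≤ (1 + 1 / n) * (θ * ‖ψ'‖ ^ 2 + θ⁻¹ * (‖ψ‖ * q * w) ^ 2) := by
        gcongr
        exact two_mul_le_add_mul_sq hθ
    _ = _ := by rw [hpow, ← hnorm]; field_simp

namespace HolomorphicDecay

variable {n : ℝ} {Ψ Ψ' : ℂ → ℂ}

lemma exists_ne_zero_vertical (h : HolomorphicDecay n Ψ Ψ') (hne : ∃ z ∈ upperHalfPlaneSet, Ψ z ≠ 0)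
    (x : ℝ) {v w : ℝ} (hv : 0 < v) (hvw : v < w) : ∃ y ∈ Icc v w, Ψ ⟨x, y⟩ ≠ 0 := by
  by_contra! hzero
  obtain ⟨y, hvy, hyw⟩ := exists_between hvw
  have hopen : IsOpen upperHalfPlaneSet := isOpen_upperHalfPlaneSet
  have han : AnalyticOnNhd ℂ Ψ upperHalfPlaneSet :=
    DifferentiableOn.analyticOnNhd
      (fun z hz => (h.hasDerivAt z hz).differentiableAt.differentiableWithinAt) hopen
  have hinj : Function.Injective fun y' : ℝ => (⟨x, y'⟩ : ℂ) := fun _ _ => congrArg Complex.im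
  have htend : Tendsto (fun y' : ℝ => (⟨x, y'⟩ : ℂ)) (𝓝[≠] y) (𝓝[≠] ⟨x, y⟩) :=
    (hasDerivAt_mk_right x y).continuousAt.continuousWithinAt.tendsto_nhdsWithin
      fun _ hy' => hinj.ne hy'
  have hfreq : ∃ᶠ z in 𝓝[≠] (⟨x, y⟩ : ℂ), Ψ z = 0 := by
    refine htend.frequently (Eventually.frequently ?_)
    filter_upwards [nhdsWithin_le_nhds (Icc_mem_nhds hvy hyw)] with y' hy' using hzero y' hy'
  obtain ⟨z, hz, hΨz⟩ := hne
  exact hΨz (han.eqOn_zero_of_preconnected_of_frequently_eq_zero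
    (convex_halfSpace_im_gt 0).isPreconnected (hv.trans hvy) hfreq hz)

lemma decay_norm_sq_rpow (h : HolomorphicDecay n Ψ Ψ') (hn : 0 < n) :
    WeightedDecay 0 (2 * n + 2) fun z => (‖Ψ z‖ ^ 2) ^ (1 + 1 / n) := by
  have hsq : WeightedDecay 0 (n + n) fun z => ‖Ψ z‖ ^ 2 := by
    simpa only [add_zero] using h.decay.norm_sq
  have hpow := hsq.norm_rpow (p := 1 + 1 / n) (by positivity)
  simp only [norm_pow, norm_norm] at hpow
  convert hpow using 1
  · ring
  · field_simp
    ring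

lemma decay_inner_mul_rpow (h : HolomorphicDecay n Ψ Ψ') (hn : 0 < n) {G : ℂ → ℂ}
    (hG : WeightedDecay 0 (n + 1) G) :
    WeightedDecay 0 (2 * n + 3)
      fun z => 2 * inner ℝ (Ψ z) (G z) * (1 + 1 / n) * (‖Ψ z‖ ^ 2) ^ (1 + 1 / n - 1) := by
  have hpow := h.decay.norm_sq.norm_rpow (p := 1 / n) (by positivity)
  have hprod := (h.decay.real_inner hG).norm_mul_norm hpow
  convert hprod.of_norm_le (c := 2 * (1 + 1 / n)) _ (by positivity) fun z _ => ?_ using 1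
  · ring
  · field_simp
    ring
  · refine ContinuousOn.mul ((continuousOn_const.mul
      (h.decay.continuousOn.inner hG.continuousOn)).mul continuousOn_const) ?_
    exact (h.decay.continuousOn.norm.pow 2).rpow_const fun _ _ => Or.inr (by
      simp only [one_div, add_sub_cancel_left]
      positivity)
  · simp only [norm_mul, norm_norm, add_sub_cancel_left, norm_pow]
    rw [Real.norm_of_nonneg (by positivity : 0 ≤ 1 + 1 / n), Real.norm_two]
    exact le_of_eq (by ring)

lemma transportControlled (h : HolomorphicDecay n Ψ Ψ') (hn : 0 < n)
    (hne : ∃ z ∈ upperHalfPlaneSet, Ψ z ≠ 0) {θ : ℝ} (hθ : 0 < θ) :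
    TransportControlled n ((1 + 1 / n) / θ) (fun z => (‖Ψ z‖ ^ 2) ^ (1 + 1 / n))
      (fun z => 2 * inner ℝ (Ψ z) (Ψ' z) * (1 + 1 / n) * (‖Ψ z‖ ^ 2) ^ (1 + 1 / n - 1))
      (fun z => 2 * inner ℝ (Ψ z) (Ψ' z * Complex.I) * (1 + 1 / n) *
        (‖Ψ z‖ ^ 2) ^ (1 + 1 / n - 1))
      (fun z => (1 + 1 / n) * θ * ‖Ψ' z‖ ^ 2) := by
  have hp : 1 ≤ 1 + 1 / n := by simpa using hn.le
  exact {
    nonneg z := by positivity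
    exists_pos x v hv w hvw := by
      obtain ⟨y, hy, hΨ⟩ := h.exists_ne_zero_vertical hne x hv hvw
      exact ⟨y, hy, by positivity⟩
    decay := h.decay_norm_sq_rpow hn
    decay_fst := h.decay_inner_mul_rpow hn h.decay_deriv
    decay_snd := h.decay_inner_mul_rpow hn <| h.decay_deriv.of_norm_le
      (h.decay_deriv.continuousOn.mul continuousOn_const) zero_le_one fun z _ => by simp
    decay_energy := by
      have hsq := h.decay_deriv.norm_sq.const_mul ((1 + 1 / n) * θ)
      convert hsq using 1 <;> ring
    hasDerivAt_fst x y hy :=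
      (hasDerivAt_comp_mk_left (h.hasDerivAt ⟨x, y⟩ hy)).norm_sq.rpow_const (Or.inr hp)
    hasDerivAt_snd x y hy :=
      (hasDerivAt_comp_mk_right (h.hasDerivAt ⟨x, y⟩ hy)).norm_sq.rpow_const (Or.inr hp)
    young z _ a b := young_inner_mul_rpow hn hθ (Ψ z) (Ψ' z) a b }

lemma const_mul (h : HolomorphicDecay n Ψ Ψ') (c : ℂ) :
    HolomorphicDecay n (fun z => c * Ψ z) (fun z => c * Ψ' z) where
  decay := h.decay.of_norm_le (continuousOn_const.mul h.decay.continuousOn) (norm_nonneg c)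
    fun _ _ => norm_mul_le _ _
  decay_deriv := h.decay_deriv.of_norm_le (continuousOn_const.mul h.decay_deriv.continuousOn)
    (norm_nonneg c) fun _ _ => norm_mul_le _ _
  hasDerivAt z hz := (h.hasDerivAt z hz).const_mul c

lemma integral_rpow_le_of_mass_eq (h : HolomorphicDecay n Ψ Ψ') (hn : 1 ≤ n)
    (hne : ∃ z ∈ upperHalfPlaneSet, Ψ z ≠ 0) {R E : ℝ} (hR : 0 < R) (hE : 0 < E)
    (hΨE : ∫ z in upperHalfPlaneSet, z.im ^ n * ‖Ψ' z‖ ^ 2 ≤ E)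
    (hmass : ∫ z in upperHalfPlaneSet, z.im ^ n * (‖Ψ z‖ ^ 2) ^ (1 + 2 / n) =
      ∫ z in upperBox R, powerWeight n (2 * n + 4) z) :
    ∫ z in upperHalfPlaneSet, z.im ^ (n - 1) * (‖Ψ z‖ ^ 2) ^ (1 + 1 / n) ≤
      (∫ z in upperBox R, powerWeight n (2 * n + 2) z) *
        (E / (n ^ 2 * ∫ z in upperBox R, powerWeight n (2 * n + 2) z)) ^ (1 + 1 / n) := by
  have hn0 : 0 < n := by linarith
  set b := ∫ z in upperBox R, powerWeight n (2 * n + 2) z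
  have hb : 0 < b := setIntegral_powerWeight_pos hn0.le (by linarith) hR
  obtain ⟨θ, hθ, hslope⟩ := exists_transport_slope hn hb hE
  have hexp : (1 + 1 / n) * ((n + 2) / (n + 1)) = 1 + 2 / n := by field_simp
  have henergy := (h.transportControlled hn0 hne hθ).energy_inequality hn hR (by
    simp only [← Real.rpow_mul (sq_nonneg ‖Ψ _‖), hexp, hmass])
  simp only [mul_left_comm _ ((1 + 1 / n) * θ), integral_const_mul] at henergy
  have hV := mul_le_mul_of_nonneg_left hΨE (by positivity : 0 ≤ (1 + 1 / n) * θ)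
  refine le_of_mul_le_mul_left ?_ hn0
  linarith

lemma mass_pos (h : HolomorphicDecay n Ψ Ψ') (hn : 1 ≤ n)
    (hne : ∃ z ∈ upperHalfPlaneSet, Ψ z ≠ 0) :
    0 < ∫ z in upperHalfPlaneSet, z.im ^ n * (‖Ψ z‖ ^ 2) ^ (1 + 2 / n) := by
  have hn0 : 0 < n := by linarith
  have hdecay : WeightedDecay n (2 * n + 4)
      fun z => z.im ^ n * (‖Ψ z‖ ^ 2) ^ (1 + 2 / n) := by
    have hpow := (h.decay.norm_sq.norm_rpow (p := 1 + 2 / n) (by positivity))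
    simp only [add_zero, mul_zero, norm_pow, norm_norm] at hpow
    convert hpow.im_rpow_mul n using 1
    field_simp
    ring
  obtain ⟨z, hz, hΨz⟩ := hne
  have hpos (w : ℂ) (hw : w ∈ upperHalfPlaneSet) : 0 < w.im := hw
  refine setIntegral_pos_of_continuousOn isOpen_upperHalfPlaneSet hdecay.continuousOn
    (hdecay.integrableOn hn0.le (by linarith)) (fun w hw => ?_) ⟨z, hz, ?_⟩
  · have := hpos w hw
    positivity
  · have := hpos z hz
    positivity

lemma integral_rpow_le_box (h : HolomorphicDecay n Ψ Ψ') (hn : 1 ≤ n)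
    (hne : ∃ z ∈ upperHalfPlaneSet, Ψ z ≠ 0) {R E : ℝ} (hR : 0 < R) (hE : 0 < E)
    (hΨE : ∫ z in upperHalfPlaneSet, z.im ^ n * ‖Ψ' z‖ ^ 2 ≤ E) :
    ∫ z in upperHalfPlaneSet, z.im ^ (n - 1) * (‖Ψ z‖ ^ 2) ^ (1 + 1 / n) ≤
      (∫ z in upperBox R, powerWeight n (2 * n + 2) z) *
        (E / (n ^ 2 * ∫ z in upperBox R, powerWeight n (2 * n + 2) z)) ^ (1 + 1 / n) := by
  have hn0 : 0 < n := by linarith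
  set m := ∫ z in upperBox R, powerWeight n (2 * n + 4) z with hm
  have hm0 : 0 < m := setIntegral_powerWeight_pos hn0.le (by linarith) hR
  set M := ∫ z in upperHalfPlaneSet, z.im ^ n * (‖Ψ z‖ ^ 2) ^ (1 + 2 / n) with hM
  have hM0 : 0 < M := h.mass_pos hn hne
  set c : ℝ := √((m / M) ^ (1 + 2 / n)⁻¹)
  have hc0 : 0 < c := by positivity
  have hcsq : (c ^ 2) ^ (1 + 2 / n) = m / M := by
    rw [Real.sq_sqrt (by positivity), Real.rpow_inv_rpow (by positivity) (by positivity)]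
  have hpull (p q : ℝ) (G : ℂ → ℂ) :
      ∫ z in upperHalfPlaneSet, z.im ^ q * (‖(c : ℂ) * G z‖ ^ 2) ^ p =
        (c ^ 2) ^ p * ∫ z in upperHalfPlaneSet, z.im ^ q * (‖G z‖ ^ 2) ^ p := by
    rw [integral_im_rpow_mul_norm_const_mul, Complex.norm_real, Real.norm_eq_abs, sq_abs]
  obtain ⟨z, hz, hΨz⟩ := hne
  have henergy : ∫ z in upperHalfPlaneSet, z.im ^ n * ‖(c : ℂ) * Ψ' z‖ ^ 2 ≤ c ^ 2 * E := by
    have hpull' := hpull 1 n Ψ'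
    simp only [Real.rpow_one] at hpull'
    rw [hpull']
    gcongr
  have hscaled := (h.const_mul c).integral_rpow_le_of_mass_eq hn
    ⟨z, hz, mul_ne_zero (by exact_mod_cast hc0.ne') hΨz⟩ hR (by positivity) henergy
    (by rw [hpull, hcsq, ← hM, div_mul_cancel₀ _ hM0.ne', hm])
  have hb := setIntegral_powerWeight_pos (t := 2 * n + 2) hn0.le (by linarith) hR
  rw [hpull, mul_div_assoc, Real.mul_rpow (sq_nonneg c) (by positivity), mul_left_comm]
    at hscaled
  exact le_of_mul_le_mul_left hscaled (by positivity)

lemma integral_rpow_le (h : HolomorphicDecay n Ψ Ψ') (hn : 1 ≤ n) :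
    ∫ z in upperHalfPlaneSet, z.im ^ (n - 1) * (‖Ψ z‖ ^ 2) ^ (1 + 1 / n) ≤
      (∫ z in upperHalfPlaneSet, powerWeight n (2 * n + 2) z) *
        ((∫ z in upperHalfPlaneSet, z.im ^ n * ‖Ψ' z‖ ^ 2) /
          (n ^ 2 * ∫ z in upperHalfPlaneSet, powerWeight n (2 * n + 2) z)) ^ (1 + 1 / n) := by
  have hn0 : 0 < n := by linarith
  set b := ∫ z in upperHalfPlaneSet, powerWeight n (2 * n + 2) z
  set V := ∫ z in upperHalfPlaneSet, z.im ^ n * ‖Ψ' z‖ ^ 2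
  have hint := integrableOn_powerWeight (s := n) (t := 2 * n + 2) hn0.le (by linarith)
  have hb0 : 0 < b := setIntegral_pos_of_continuousOn isOpen_upperHalfPlaneSet
    (weightedDecay_powerWeight _ _).continuousOn hint (fun _ hz => (powerWeight_pos hz).le)
    ⟨Complex.I, by simp, powerWeight_pos (by simp)⟩
  have hV0 : 0 ≤ V := setIntegral_nonneg isOpen_upperHalfPlaneSet.measurableSet fun z hz => by
    have hz' : 0 < z.im := hz
    positivity
  by_cases hne : ∃ z ∈ upperHalfPlaneSet, Ψ z ≠ 0
  · have hlim : Tendsto (fun R : ℝ => (∫ z in upperBox R, powerWeight n (2 * n + 2) z) *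
        ((V + R⁻¹) / (n ^ 2 * ∫ z in upperBox R, powerWeight n (2 * n + 2) z)) ^ (1 + 1 / n))
        atTop (𝓝 (b * (V / (n ^ 2 * b)) ^ (1 + 1 / n))) := by
      have hbox := tendsto_setIntegral_upperBox hint
      have hE : Tendsto (fun R : ℝ => V + R⁻¹) atTop (𝓝 V) := by
        simpa only [add_zero] using tendsto_inv_atTop_zero.const_add V
      exact hbox.mul (((hE.div (hbox.const_mul _) (by positivity))).rpow_const
        (Or.inr (by positivity)))
    refine ge_of_tendsto hlim ?_
    filter_upwards [eventually_gt_atTop 0] with R hR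
    have hR' : 0 < R⁻¹ := inv_pos.2 hR
    exact h.integral_rpow_le_box hn hne hR (by positivity) (by linarith)
  · push Not at hne
    have hzero : ∫ z in upperHalfPlaneSet, z.im ^ (n - 1) * (‖Ψ z‖ ^ 2) ^ (1 + 1 / n) = 0 :=
      setIntegral_eq_zero_of_forall_eq_zero fun z hz => by
        rw [hne z hz, norm_zero, zero_pow two_ne_zero, Real.zero_rpow (by positivity), mul_zero]
    rw [hzero]
    positivity

end HolomorphicDecay

end HolomorphicInequality

section Cayley

open Set UpperHalfPlane

/-- The Cayley transform of the upper half plane onto the unit disc. -/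
noncomputable def cayley (z : ℂ) : ℂ := (z - Complex.I) / (z + Complex.I)

lemma add_I_ne_zero {z : ℂ} (hz : z ∈ upperHalfPlaneSet) : z + Complex.I ≠ 0 :=
  norm_pos_iff.1 (norm_add_I_pos hz)

lemma one_sub_norm_cayley_sq {z : ℂ} (hz : z + Complex.I ≠ 0) :
    1 - ‖cayley z‖ ^ 2 = 4 * z.im / ‖z + Complex.I‖ ^ 2 := by
  have hN : ‖z + Complex.I‖ ^ 2 ≠ 0 := by simpa
  rw [cayley, norm_div, div_pow, eq_div_iff hN, sub_mul, div_mul_cancel₀ _ hN]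
  simp only [← Complex.normSq_eq_norm_sq, Complex.normSq_apply, Complex.add_re, Complex.add_im,
    Complex.sub_re, Complex.sub_im, Complex.I_re, Complex.I_im]
  ring

lemma cayley_mem_ball_iff {z : ℂ} (hz : z + Complex.I ≠ 0) :
    cayley z ∈ ball (0 : ℂ) 1 ↔ z ∈ upperHalfPlaneSet := by
  have hN : 0 < ‖z + Complex.I‖ ^ 2 := by positivity
  rw [mem_ball_zero_iff, ← sq_lt_one_iff₀ (norm_nonneg _), ← sub_pos, one_sub_norm_cayley_sq hz,
    div_pos_iff_of_pos_right hN, mul_pos_iff_of_pos_left four_pos]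
  rfl

lemma cayley_mem_ball {z : ℂ} (hz : z ∈ upperHalfPlaneSet) : cayley z ∈ ball (0 : ℂ) 1 :=
  (cayley_mem_ball_iff (add_I_ne_zero hz)).2 hz

lemma one_sub_cayley {z : ℂ} (hz : z ∈ upperHalfPlaneSet) :
    1 - cayley z = 2 * Complex.I / (z + Complex.I) := by
  have hN := add_I_ne_zero hz
  rw [cayley]
  field_simp
  ring

lemma injOn_cayley : InjOn cayley upperHalfPlaneSet := fun z hz w hw hzw => by
  have heq : 2 * Complex.I / (z + Complex.I) = 2 * Complex.I / (w + Complex.I) := by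
    rw [← one_sub_cayley hz, hzw, one_sub_cayley hw]
  rw [div_eq_div_iff (add_I_ne_zero hz) (add_I_ne_zero hw)] at heq
  exact (add_right_cancel (mul_left_cancel₀ (by simp) heq)).symm

lemma image_cayley : cayley '' upperHalfPlaneSet = ball 0 1 := by
  refine Subset.antisymm (image_subset_iff.2 fun z hz => cayley_mem_ball hz) fun ζ hζ => ?_
  have hζ1 : 1 - ζ ≠ 0 := sub_ne_zero.2 fun h => by simp [← h] at hζ
  set z := Complex.I * (1 + ζ) / (1 - ζ) with hz
  have hadd : z + Complex.I = 2 * Complex.I / (1 - ζ) := by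
    rw [hz]
    field_simp
    ring
  have hne : z + Complex.I ≠ 0 := by rw [hadd]; exact div_ne_zero (by simp) hζ1
  have hcay : cayley z = ζ := by
    rw [cayley, hadd, hz]
    field_simp
    ring
  exact ⟨z, (cayley_mem_ball_iff hne).1 (hcay ▸ hζ), hcay⟩

lemma hasDerivAt_cayley {z : ℂ} (hz : z ∈ upperHalfPlaneSet) :
    HasDerivAt cayley (2 * Complex.I / (z + Complex.I) ^ 2) z := by
  refine (((hasDerivAt_id' z).sub_const _).div ((hasDerivAt_id' z).add_const _)
    (add_I_ne_zero hz)).congr_deriv ?_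
  ring

lemma det_restrictScalars_toSpanSingleton (c : ℂ) :
    ((ContinuousLinearMap.toSpanSingleton ℂ c).restrictScalars ℝ).det = ‖c‖ ^ 2 := by
  rw [← Complex.normSq_eq_norm_sq, ContinuousLinearMap.det,
    ContinuousLinearMap.coe_restrictScalars, LinearMap.det_restrictScalars, LinearMap.det_ring,
    ContinuousLinearMap.coe_coe, ContinuousLinearMap.toSpanSingleton_apply_one,
    Algebra.norm_complex_apply]

lemma setIntegral_ball_eq_upperHalfPlaneSet (G : ℂ → ℝ) :
    ∫ ζ in ball (0 : ℂ) 1, G ζ =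
      ∫ z in upperHalfPlaneSet, 4 / ‖z + Complex.I‖ ^ 4 * G (cayley z) := by
  have hcov := integral_image_eq_integral_abs_det_fderiv_smul volume
    isOpen_upperHalfPlaneSet.measurableSet (fun z hz =>
      ((hasDerivAt_cayley hz).hasFDerivAt.restrictScalars ℝ).hasFDerivWithinAt) injOn_cayley G
  rw [image_cayley] at hcov
  refine hcov.trans (integral_congr_ae (.of_forall fun z => ?_))
  dsimp only
  rw [det_restrictScalars_toSpanSingleton, abs_of_nonneg (sq_nonneg _), norm_div, norm_mul,
    Complex.norm_I, Complex.norm_ofNat, norm_pow, smul_eq_mul]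
  ring

/-- The weight-`s` pullback of a function on the disc to the upper half plane. -/
noncomputable def cayleyPullback (s : ℝ) (A : ℂ → ℂ) (z : ℂ) : ℂ :=
  A (cayley z) * (z + Complex.I) ^ ((-s : ℝ) : ℂ)

/-- The operator on the disc which corresponds to differentiation under the weight-`s` pullback,
raising the weight by one. -/
noncomputable def weightRaising (s : ℝ) (A : ℂ → ℂ) (ζ : ℂ) : ℂ := deriv A ζ * (1 - ζ) - s * A ζ

lemma norm_cayleyPullback (s : ℝ) (A : ℂ → ℂ) (z : ℂ) :
    ‖cayleyPullback s A z‖ = ‖A (cayley z)‖ * ‖z + Complex.I‖ ^ (-s) := by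
  rw [cayleyPullback, norm_mul, Complex.norm_cpow_real]

lemma hasDerivAt_cayleyPullback (s : ℝ) {A : ℂ → ℂ} {z : ℂ} (hz : z ∈ upperHalfPlaneSet)
    (hA : DifferentiableAt ℂ A (cayley z)) :
    HasDerivAt (cayleyPullback s A) (cayleyPullback (s + 1) (weightRaising s A) z) z := by
  have hN := add_I_ne_zero hz
  have hslit : z + Complex.I ∈ Complex.slitPlane := by
    right
    simp only [Complex.add_im, Complex.I_im]
    linarith [show 0 < z.im from hz]
  have hpow := ((hasDerivAt_id' z).add_const Complex.I).cpow_const (c := ((-s : ℝ) : ℂ)) hslit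
  refine ((hA.hasDerivAt.comp z (hasDerivAt_cayley hz)).mul hpow).congr_deriv ?_
  have hexp : (z + Complex.I) ^ (((-s : ℝ) : ℂ) - 1) =
      (z + Complex.I) ^ ((-(s + 1) : ℝ) : ℂ) := by
    push_cast
    ring_nf
  have hexp' : (z + Complex.I) ^ ((-s : ℝ) : ℂ) =
      (z + Complex.I) ^ ((-(s + 1) : ℝ) : ℂ) * (z + Complex.I) := by
    rw [← hexp, Complex.cpow_sub _ _ hN, Complex.cpow_one, div_mul_cancel₀ _ hN]
  rw [hexp, hexp', Function.comp_apply, cayleyPullback, weightRaising, one_sub_cayley hz]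
  push_cast
  field_simp
  ring

lemma analyticOnNhd_weightRaising (s : ℝ) {A : ℂ → ℂ} {U : Set ℂ} (hA : AnalyticOnNhd ℂ A U) :
    AnalyticOnNhd ℂ (weightRaising s A) U :=
  (hA.deriv.mul (analyticOnNhd_const.sub analyticOnNhd_id)).sub (analyticOnNhd_const.mul hA)

lemma weightedDecay_cayleyPullback (s : ℝ) {A : ℂ → ℂ}
    (hA : AnalyticOnNhd ℂ A (closedBall 0 1)) : WeightedDecay 0 s (cayleyPullback s A) where
  continuousOn _ hz := (hasDerivAt_cayleyPullback s hz
    (hA _ (ball_subset_closedBall (cayley_mem_ball hz))).differentiableAt).continuousAt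
      |>.continuousWithinAt
  bound := by
    obtain ⟨M, hM⟩ :=
      (isCompact_closedBall (0 : ℂ) 1).exists_bound_of_continuousOn hA.continuousOn
    refine ⟨M, fun _ hz => ?_⟩
    rw [norm_cayleyPullback, Real.rpow_zero, one_mul]
    gcongr
    exact hM _ (ball_subset_closedBall (cayley_mem_ball hz))

lemma holomorphicDecay_cayleyPullback (s : ℝ) {A : ℂ → ℂ}
    (hA : AnalyticOnNhd ℂ A (closedBall 0 1)) :
    HolomorphicDecay s (cayleyPullback s A) (cayleyPullback (s + 1) (weightRaising s A)) where
  decay := weightedDecay_cayleyPullback s hA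
  decay_deriv := weightedDecay_cayleyPullback (s + 1) (analyticOnNhd_weightRaising s hA)
  hasDerivAt _ hz := hasDerivAt_cayleyPullback s hz
    (hA _ (ball_subset_closedBall (cayley_mem_ball hz))).differentiableAt

lemma setIntegral_ball_norm_sq_rpow {s a p : ℝ} (h : s * p = a + 2) (A : ℂ → ℂ) :
    ∫ ζ in ball (0 : ℂ) 1, (1 - ‖ζ‖ ^ 2) ^ a * (‖A ζ‖ ^ 2) ^ p =
      4 ^ (a + 1) * ∫ z in upperHalfPlaneSet, z.im ^ a * (‖cayleyPullback s A z‖ ^ 2) ^ p := by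
  rw [setIntegral_ball_eq_upperHalfPlaneSet, ← integral_const_mul]
  refine setIntegral_congr_fun isOpen_upperHalfPlaneSet.measurableSet fun z hz => ?_
  have hz' : 0 < z.im := hz
  have hN := norm_add_I_pos hz
  have hpow : ((‖z + Complex.I‖ ^ (-s)) ^ 2) ^ p =
      (‖z + Complex.I‖ ^ 4)⁻¹ * ((‖z + Complex.I‖ ^ 2) ^ a)⁻¹ := by
    rw [← Real.rpow_mul_natCast hN.le, ← Real.rpow_mul hN.le, ← Real.rpow_natCast,
      ← Real.rpow_natCast, ← Real.rpow_mul hN.le, ← Real.rpow_neg hN.le, ← Real.rpow_neg hN.le,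
      ← Real.rpow_add hN]
    congr 1
    push_cast
    linarith
  rw [one_sub_norm_cayley_sq (add_I_ne_zero hz), norm_cayleyPullback, mul_pow,
    Real.mul_rpow (by positivity) (by positivity), hpow, Real.div_rpow (by positivity)
    (by positivity), Real.mul_rpow four_pos.le hz'.le, Real.rpow_add_one four_pos.ne']
  field_simp

end Cayley

section DiscMean

open Set Filter Topology UpperHalfPlane

lemma one_sub_norm_sq_pos {ζ : ℂ} (hζ : ζ ∈ ball (0 : ℂ) 1) : 0 < 1 - ‖ζ‖ ^ 2 :=
  sub_pos.2 ((sq_lt_one_iff₀ (norm_nonneg ζ)).2 (mem_ball_zero_iff.1 hζ))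

/-- The mean of `g` against the probability density `((a + 1) / π) (1 - |ζ|²) ^ a` on the disc. -/
noncomputable def discMean (a : ℝ) (g : ℂ → ℝ) : ℝ :=
  (a + 1) / Real.pi * ∫ ζ in ball (0 : ℂ) 1, (1 - ‖ζ‖ ^ 2) ^ a * g ζ

lemma discMean_le_iff {a B : ℝ} (ha : -1 < a) {g : ℂ → ℝ} : discMean a g ≤ B ↔
    ∫ ζ in ball (0 : ℂ) 1, (1 - ‖ζ‖ ^ 2) ^ a * g ζ ≤ Real.pi / (a + 1) * B := by
  have ha' : 0 < a + 1 := by linarith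
  rw [discMean, ← inv_div, inv_mul_le_iff₀ (by positivity)]

lemma setIntegral_mul_one_sub_sq_rpow {a : ℝ} (ha : -1 < a) :
    ∫ r in Ioo (0 : ℝ) 1, r * (1 - r ^ 2) ^ a = 1 / (2 * (a + 1)) := by
  have ha' : 0 < a + 1 := by linarith
  have hcont : ContinuousOn (fun r : ℝ => -(1 - r ^ 2) ^ (a + 1) / (2 * (a + 1))) (Icc 0 1) := by
    fun_prop (disch := grind)
  have hderiv : ∀ r ∈ Ioo (0 : ℝ) 1, HasDerivAt
      (fun r : ℝ => -(1 - r ^ 2) ^ (a + 1) / (2 * (a + 1))) (r * (1 - r ^ 2) ^ a) r := by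
    intro r hr
    have hpos : 1 - r ^ 2 ≠ 0 := by nlinarith [hr.1, hr.2]
    refine ((((hasDerivAt_pow 2 r).const_sub 1).rpow_const (.inl hpos)).neg.div_const
      (2 * (a + 1))).congr_deriv ?_
    rw [add_sub_cancel_right]
    field_simp
    push_cast
    ring
  have hnonneg : ∀ r ∈ Ioo (0 : ℝ) 1, 0 ≤ r * (1 - r ^ 2) ^ a := fun r hr =>
    mul_nonneg hr.1.le (Real.rpow_nonneg (by nlinarith [hr.1, hr.2]) a)
  have hint := (intervalIntegrable_iff_integrableOn_Ioc_of_le zero_le_one).2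
    (intervalIntegral.integrableOn_deriv_of_nonneg hcont hderiv hnonneg)
  rw [← integral_Ioc_eq_integral_Ioo, ← intervalIntegral.integral_of_le zero_le_one,
    intervalIntegral.integral_eq_sub_of_hasDerivAt_of_le zero_le_one hcont hderiv hint]
  simp [Real.zero_rpow ha'.ne', neg_div]

lemma discMean_one {a : ℝ} (ha : -1 < a) : discMean a (fun _ => 1) = 1 := by
  have ha' : 0 < a + 1 := by linarith
  have hpolar := integral_fun_norm_addHaar (volume : Measure ℂ)
    ((Iio 1).indicator fun r : ℝ => (1 - r ^ 2) ^ a)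
  have hball : ∫ ζ : ℂ, (Iio 1).indicator (fun r : ℝ => (1 - r ^ 2) ^ a) ‖ζ‖ =
      ∫ ζ in ball (0 : ℂ) 1, (1 - ‖ζ‖ ^ 2) ^ a := by
    rw [← integral_indicator measurableSet_ball]
    congr 1 with ζ
    simp only [indicator, mem_Iio, mem_ball_zero_iff]
  have hradial : ∫ r in Ioi (0 : ℝ), r ^ (2 - 1) • (Iio 1).indicator (fun r => (1 - r ^ 2) ^ a) r =
      ∫ r in Ioo (0 : ℝ) 1, r * (1 - r ^ 2) ^ a := by
    rw [← Ioi_inter_Iio, ← setIntegral_indicator measurableSet_Iio]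
    congr 1 with r
    by_cases hr : r < 1 <;> simp [indicator, hr]
  rw [hball, Complex.finrank_real_complex, hradial, setIntegral_mul_one_sub_sq_rpow ha] at hpolar
  have hvol : volume.real (ball (0 : ℂ) 1) = Real.pi := by
    simp [measureReal_def, Complex.volume_ball]
  simp only [discMean, mul_one]
  rw [hpolar, hvol, nsmul_eq_mul, smul_eq_mul]
  push_cast
  field_simp

variable {n : ℝ} {A : ℂ → ℂ}

lemma integral_im_rpow_mul_norm_weightRaising_sq (hn : 2 ≤ n)
    (hA : AnalyticOnNhd ℂ A (closedBall 0 1)) :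
    ∫ z in upperHalfPlaneSet, z.im ^ n * ‖cayleyPullback (n + 1) (weightRaising n A) z‖ ^ 2 =
      n * Real.pi / 4 ^ n * discMean (n - 2) fun ζ => ‖A ζ‖ ^ 2 := by
  have htransfer := setIntegral_ball_norm_sq_rpow (s := n) (a := n - 2) (p := 1) (by ring) A
  simp only [Real.rpow_one] at htransfer
  rw [discMean, htransfer, integral_im_rpow_mul_norm_deriv_sq hn
    (holomorphicDecay_cayleyPullback n hA) (holomorphicDecay_cayleyPullback (n + 1)
      (A := weightRaising n A) (analyticOnNhd_weightRaising n hA)),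
    show n - 2 + 1 = n - 1 by ring, Real.rpow_sub_one four_ne_zero]
  field_simp

lemma setIntegral_powerWeight (hn : 2 ≤ n) :
    ∫ z in upperHalfPlaneSet, powerWeight n (2 * n + 2) z = Real.pi / (n * 4 ^ n) := by
  have hn0 : 0 < n := by linarith
  have hnorm := integral_im_rpow_mul_norm_weightRaising_sq (A := fun _ => 1) hn
    analyticOnNhd_const
  have hweight : ∀ z : ℂ, z.im ^ n * ‖cayleyPullback (n + 1) (weightRaising n fun _ => 1) z‖ ^ 2 =
      n ^ 2 * powerWeight n (2 * n + 2) z := fun z => by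
    have hconst : ‖weightRaising n (fun _ => 1) (cayley z)‖ ^ 2 = n ^ 2 := by
      simp [weightRaising]
    rw [norm_cayleyPullback, mul_pow, hconst, powerWeight,
      ← Real.rpow_mul_natCast (norm_nonneg _), mul_left_comm]
    congr 3
    push_cast
    ring
  simp only [hweight, norm_one, one_pow] at hnorm
  rw [integral_const_mul, discMean_one (by linarith), mul_one] at hnorm
  rw [eq_div_iff (by positivity)]
  rw [eq_div_iff (by positivity)] at hnorm
  exact mul_left_cancel₀ hn0.ne' (by linarith)

lemma discMean_rpow_le_of_analyticOnNhd (hn : 2 ≤ n) (hA : AnalyticOnNhd ℂ A (closedBall 0 1)) :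
    discMean (n - 1) (fun ζ => (‖A ζ‖ ^ 2) ^ (1 + 1 / n)) ≤
      discMean (n - 2) (fun ζ => ‖A ζ‖ ^ 2) ^ (1 + 1 / n) := by
  have : 0 < n := by linarith
  have hineq := (holomorphicDecay_cayleyPullback n hA).integral_rpow_le (by linarith)
  rw [integral_im_rpow_mul_norm_weightRaising_sq hn hA, setIntegral_powerWeight hn] at hineq
  have htransfer := setIntegral_ball_norm_sq_rpow (s := n) (a := n - 1) (p := 1 + 1 / n)
    (by field_simp; ring) A
  set M := discMean (n - 2) fun ζ => ‖A ζ‖ ^ 2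
  have hcancel : n * Real.pi / 4 ^ n * M / (n ^ 2 * (Real.pi / (n * 4 ^ n))) = M := by
    field_simp
  rw [hcancel] at hineq
  rw [discMean, htransfer, sub_add_cancel]
  calc _ ≤ n / Real.pi * (4 ^ n * (Real.pi / (n * 4 ^ n) * M ^ (1 + 1 / n))) := by gcongr
    _ = M ^ (1 + 1 / n) := by field_simp

lemma smul_mem_ball_of_lt_one {ρ : ℝ} (hρ₀ : 0 < ρ) (hρ₁ : ρ < 1) {ζ : ℂ}
    (hζ : ζ ∈ closedBall (0 : ℂ) 1) : ρ • ζ ∈ ball (0 : ℂ) 1 := by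
  rw [mem_ball_zero_iff, norm_smul, Real.norm_of_nonneg hρ₀.le]
  exact mul_lt_one_of_nonneg_of_lt_one_left hρ₀.le hρ₁ (mem_closedBall_zero_iff.1 hζ)

lemma discMean_comp_smul_le {a ρ : ℝ} (ha : 0 ≤ a) (hρ₀ : 0 < ρ) (hρ₁ : ρ ≤ 1) {g : ℂ → ℝ}
    (hg : ∀ ζ, 0 ≤ g ζ) (hint : IntegrableOn (fun ζ => (1 - ‖ζ‖ ^ 2) ^ a * g ζ) (ball 0 1)) :
    discMean a (fun ζ => g (ρ • ζ)) ≤ (ρ ^ 2)⁻¹ * discMean a g := by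
  set W : ℂ → ℝ := (ball 0 1).indicator fun ζ => (1 - ‖ζ‖ ^ 2) ^ a * g ζ with hW
  have hW0 : ∀ ζ, 0 ≤ W ζ := indicator_nonneg fun ζ hζ =>
    mul_nonneg (Real.rpow_nonneg (one_sub_norm_sq_pos hζ).le a) (hg ζ)
  have hWint : Integrable fun ζ => W (ρ • ζ) :=
    ((integrable_indicator_iff measurableSet_ball).2 hint).comp_smul hρ₀.ne'
  have hle : ∀ ζ ∈ ball (0 : ℂ) 1, (1 - ‖ζ‖ ^ 2) ^ a * g (ρ • ζ) ≤ W (ρ • ζ) := by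
    intro ζ hζ
    have hnorm : ‖ρ • ζ‖ ≤ ‖ζ‖ := by
      rw [norm_smul, Real.norm_of_nonneg hρ₀.le]
      exact mul_le_of_le_one_left (norm_nonneg ζ) hρ₁
    rw [hW, indicator_of_mem (mem_ball_zero_iff.2 (hnorm.trans_lt (mem_ball_zero_iff.1 hζ)))]
    have := one_sub_norm_sq_pos hζ
    have := hg (ρ • ζ)
    gcongr
  have hscale : ∫ ζ, W (ρ • ζ) =
      (ρ ^ 2)⁻¹ * ∫ ζ in ball (0 : ℂ) 1, (1 - ‖ζ‖ ^ 2) ^ a * g ζ := by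
    rw [Measure.integral_comp_smul_of_nonneg _ _ _ (hR := hρ₀.le), Complex.finrank_real_complex,
      smul_eq_mul, integral_indicator measurableSet_ball]
  rw [discMean, discMean, mul_left_comm, ← hscale]
  refine mul_le_mul_of_nonneg_left ?_ (by positivity)
  calc _ ≤ ∫ ζ in ball (0 : ℂ) 1, W (ρ • ζ) := by
        refine integral_mono_of_nonneg ?_ hWint.integrableOn ?_ <;>
          refine (ae_restrict_iff' measurableSet_ball).2 (.of_forall fun ζ hζ => ?_)
        · exact mul_nonneg (Real.rpow_nonneg (one_sub_norm_sq_pos hζ).le a) (hg _)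
        · exact hle ζ hζ
    _ ≤ ∫ ζ, W (ρ • ζ) := setIntegral_le_integral hWint (.of_forall fun _ => hW0 _)

lemma integrable_and_integral_le_of_tendsto {α : Type*} [MeasurableSpace α] {μ : Measure α}
    {F : ℕ → α → ℝ} {G : α → ℝ} {B : ℕ → ℝ} {b : ℝ} (hint : ∀ n, Integrable (F n) μ)
    (hnonneg : ∀ n, 0 ≤ᵐ[μ] F n) (hlim : ∀ᵐ x ∂μ, Tendsto (fun n => F n x) atTop (𝓝 (G x)))
    (hle : ∀ n, ∫ x, F n x ∂μ ≤ B n) (hB : Tendsto B atTop (𝓝 b)) :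
    Integrable G μ ∧ ∫ x, G x ∂μ ≤ b := by
  have hmeas := aestronglyMeasurable_of_tendsto_ae _ (fun n => (hint n).aestronglyMeasurable) hlim
  have hG0 : 0 ≤ᵐ[μ] G := by
    filter_upwards [hlim, ae_all_iff.2 hnonneg] with x hx hx0
    exact ge_of_tendsto' hx hx0
  have hb0 : 0 ≤ b :=
    ge_of_tendsto' hB fun n => (integral_nonneg_of_ae (hnonneg n)).trans (hle n)
  have hlintegral : ∫⁻ x, ENNReal.ofReal (G x) ∂μ ≤ ENNReal.ofReal b := by
    calc ∫⁻ x, ENNReal.ofReal (G x) ∂μ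
        = ∫⁻ x, liminf (fun n => ENNReal.ofReal (F n x)) atTop ∂μ := by
          refine lintegral_congr_ae ?_
          filter_upwards [hlim] with x hx using (ENNReal.tendsto_ofReal hx).liminf_eq.symm
      _ ≤ liminf (fun n => ∫⁻ x, ENNReal.ofReal (F n x) ∂μ) atTop :=
          lintegral_liminf_le' fun n => (hint n).aestronglyMeasurable.aemeasurable.ennreal_ofReal
      _ ≤ liminf (fun n => ENNReal.ofReal (B n)) atTop := by
          refine liminf_le_liminf (.of_forall fun n => ?_)
          rw [← ofReal_integral_eq_lintegral_ofReal (hint n) (hnonneg n)]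
          exact ENNReal.ofReal_le_ofReal (hle n)
      _ = ENNReal.ofReal b := (ENNReal.tendsto_ofReal hB).liminf_eq
  have hG : Integrable G μ := ⟨hmeas, (hasFiniteIntegral_iff_ofReal hG0).2
    (hlintegral.trans_lt ENNReal.ofReal_lt_top)⟩
  rw [← ofReal_integral_eq_lintegral_ofReal hG hG0, ENNReal.ofReal_le_ofReal_iff hb0] at hlintegral
  exact ⟨hG, hlintegral⟩

lemma integrableOn_one_sub_norm_sq_rpow_mul {a : ℝ} (ha : 0 ≤ a) {g : ℂ → ℝ}
    (hg : ContinuousOn g (closedBall 0 1)) :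
    IntegrableOn (fun ζ => (1 - ‖ζ‖ ^ 2) ^ a * g ζ) (ball 0 1) := by
  have hweight : Continuous fun ζ : ℂ => (1 - ‖ζ‖ ^ 2) ^ a :=
    Continuous.rpow_const (by fun_prop) fun _ => .inr ha
  exact ((hweight.continuousOn.mul hg).integrableOn_compact (isCompact_closedBall 0 1)).mono_set
    ball_subset_closedBall

variable {Φ : ℂ → ℂ}

lemma analyticOnNhd_comp_smul (hΦ : DifferentiableOn ℂ Φ (ball 0 1)) {ρ : ℝ} (hρ₀ : 0 < ρ)
    (hρ₁ : ρ < 1) : AnalyticOnNhd ℂ (fun ζ => Φ (ρ • ζ)) (closedBall 0 1) := fun _ hζ =>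
  (hΦ.analyticOnNhd isOpen_ball _ (smul_mem_ball_of_lt_one hρ₀ hρ₁ hζ)).comp
    (analyticAt_id.fun_const_smul)

lemma discMean_rpow_comp_smul_le (hn : 2 ≤ n) (hΦ : DifferentiableOn ℂ Φ (ball 0 1))
    (hint : IntegrableOn (fun ζ => (1 - ‖ζ‖ ^ 2) ^ (n - 2) * ‖Φ ζ‖ ^ 2) (ball 0 1))
    {ρ : ℝ} (hρ₀ : 0 < ρ) (hρ₁ : ρ < 1) :
    discMean (n - 1) (fun ζ => (‖Φ (ρ • ζ)‖ ^ 2) ^ (1 + 1 / n)) ≤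
      ((ρ ^ 2)⁻¹ * discMean (n - 2) fun ζ => ‖Φ ζ‖ ^ 2) ^ (1 + 1 / n) := by
  have hn0 : 0 ≤ n - 2 := by linarith
  have hmean0 : 0 ≤ discMean (n - 2) fun ζ => ‖Φ (ρ • ζ)‖ ^ 2 :=
    mul_nonneg (by positivity) (setIntegral_nonneg measurableSet_ball fun _ hζ =>
      mul_nonneg (Real.rpow_nonneg (one_sub_norm_sq_pos hζ).le _) (sq_nonneg _))
  have hscale := discMean_comp_smul_le hn0 hρ₀ hρ₁.le (fun ζ => sq_nonneg ‖Φ ζ‖) hint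
  exact (discMean_rpow_le_of_analyticOnNhd hn (analyticOnNhd_comp_smul hΦ hρ₀ hρ₁)).trans
    (Real.rpow_le_rpow hmean0 hscale (by positivity))

lemma tendsto_comp_smul (hΦ : DifferentiableOn ℂ Φ (ball 0 1)) {r : ℕ → ℝ}
    (hr : Tendsto r atTop (𝓝 1)) {ζ : ℂ} (hζ : ζ ∈ ball (0 : ℂ) 1) :
    Tendsto (fun m => Φ (r m • ζ)) atTop (𝓝 (Φ ζ)) := by
  have hsmul : Tendsto (fun m => r m • ζ) atTop (𝓝 ζ) := by
    simpa only [one_smul] using hr.smul_const ζ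
  exact (hΦ.differentiableAt (isOpen_ball.mem_nhds hζ)).continuousAt.tendsto.comp hsmul

lemma integrableOn_and_discMean_rpow_le (hn : 2 ≤ n) (hΦ : DifferentiableOn ℂ Φ (ball 0 1))
    (hint : IntegrableOn (fun ζ => (1 - ‖ζ‖ ^ 2) ^ (n - 2) * ‖Φ ζ‖ ^ 2) (ball 0 1)) :
    IntegrableOn (fun ζ => (1 - ‖ζ‖ ^ 2) ^ (n - 1) * (‖Φ ζ‖ ^ 2) ^ (1 + 1 / n)) (ball 0 1) ∧
      discMean (n - 1) (fun ζ => (‖Φ ζ‖ ^ 2) ^ (1 + 1 / n)) ≤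
        discMean (n - 2) (fun ζ => ‖Φ ζ‖ ^ 2) ^ (1 + 1 / n) := by
  have hp : 0 ≤ 1 + 1 / n := by positivity
  have hn1 : -1 < n - 1 := by linarith
  set M := discMean (n - 2) fun ζ => ‖Φ ζ‖ ^ 2
  obtain ⟨r, -, hr, hr_lim⟩ := exists_seq_strictMono_tendsto' (zero_lt_one' ℝ)
  have hdilate : ∀ m, IntegrableOn
      (fun ζ => (1 - ‖ζ‖ ^ 2) ^ (n - 1) * (‖Φ (r m • ζ)‖ ^ 2) ^ (1 + 1 / n)) (ball 0 1) := fun m =>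
    integrableOn_one_sub_norm_sq_rpow_mul (by linarith)
      (((analyticOnNhd_comp_smul hΦ (hr m).1 (hr m).2).continuousOn.norm.pow 2).rpow_const
        fun _ _ => .inr hp)
  have hbound : ∀ m, ∫ ζ in ball (0 : ℂ) 1,
      (1 - ‖ζ‖ ^ 2) ^ (n - 1) * (‖Φ (r m • ζ)‖ ^ 2) ^ (1 + 1 / n) ≤
        Real.pi / (n - 1 + 1) * ((r m ^ 2)⁻¹ * M) ^ (1 + 1 / n) := fun m =>
    (discMean_le_iff hn1).1 (discMean_rpow_comp_smul_le hn hΦ hint (hr m).1 (hr m).2)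
  have hbound_lim : Tendsto (fun m => Real.pi / (n - 1 + 1) * ((r m ^ 2)⁻¹ * M) ^ (1 + 1 / n))
      atTop (𝓝 (Real.pi / (n - 1 + 1) * M ^ (1 + 1 / n))) := by
    have hinv : Tendsto (fun m => (r m ^ 2)⁻¹ * M) atTop (𝓝 M) := by
      simpa using ((hr_lim.pow 2).inv₀ (by norm_num)).mul_const M
    exact (hinv.rpow_const (.inr hp)).const_mul _
  obtain ⟨hint', hle⟩ := integrable_and_integral_le_of_tendsto hdilate
    (fun m => (ae_restrict_iff' measurableSet_ball).2 (.of_forall fun ζ hζ =>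
      mul_nonneg (Real.rpow_nonneg (one_sub_norm_sq_pos hζ).le _) (by positivity)))
    ((ae_restrict_iff' measurableSet_ball).2 (.of_forall fun ζ hζ =>
      (((tendsto_comp_smul hΦ hr_lim hζ).norm.pow 2).rpow_const (.inr hp)).const_mul _))
    hbound hbound_lim
  exact ⟨hint', (discMean_le_iff hn1).2 hle⟩

end DiscMean

section Entropy

open Set

lemma integral_nuMeasure_and_integrable_iff {k a : ℝ} (hk : 1 / 2 < k) (ha : -1 < a)
    {F g : ℂ → ℝ} (hF : ∀ ζ ∈ ball (0 : ℂ) 1, F ζ = (1 - ‖ζ‖ ^ 2) ^ (a + 2) * g ζ) :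
    ∫ ζ, F ζ ∂(nuMeasure k) = (2 * k - 1) / (a + 1) * discMean a g ∧
      (Integrable F (nuMeasure k) ↔
        IntegrableOn (fun ζ => (1 - ‖ζ‖ ^ 2) ^ a * g ζ) (ball 0 1)) := by
  have hk' : 0 < 2 * k - 1 := by linarith
  have ha' : 0 < a + 1 := by linarith
  have hmeas : Measurable fun ζ : ℂ =>
      ENNReal.ofReal ((2 * k - 1) / Real.pi * ((1 - ‖ζ‖ ^ 2) ^ 2)⁻¹) := by
    fun_prop
  have hfin : ∀ᵐ ζ ∂(volume.restrict (ball (0 : ℂ) 1)),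
      ENNReal.ofReal ((2 * k - 1) / Real.pi * ((1 - ‖ζ‖ ^ 2) ^ 2)⁻¹) < ⊤ :=
    .of_forall fun _ => ENNReal.ofReal_lt_top
  have hdensity : EqOn (fun ζ =>
      (ENNReal.ofReal ((2 * k - 1) / Real.pi * ((1 - ‖ζ‖ ^ 2) ^ 2)⁻¹)).toReal • F ζ)
      (fun ζ => (2 * k - 1) / Real.pi * ((1 - ‖ζ‖ ^ 2) ^ a * g ζ)) (ball 0 1) := fun ζ hζ => by
    have hpos := one_sub_norm_sq_pos hζ
    dsimp only
    rw [ENNReal.toReal_ofReal (by positivity), smul_eq_mul, hF ζ hζ, Real.rpow_add hpos,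
      Real.rpow_two]
    field_simp
  constructor
  · rw [nuMeasure, integral_withDensity_eq_integral_toReal_smul hmeas hfin,
      setIntegral_congr_fun measurableSet_ball hdensity, integral_const_mul, discMean]
    field_simp
  · rw [nuMeasure, integrable_withDensity_iff_integrable_smul' hmeas hfin, ← IntegrableOn,
      integrableOn_congr_fun hdensity measurableSet_ball]
    exact integrable_const_mul_iff (IsUnit.mk0 _ (by positivity)) _

lemma mul_mul_log_le {s c x : ℝ} (hs : 0 < s) (hc : 0 < c) (hx : 0 ≤ x) :
    s * (x * Real.log x) ≤ x ^ (1 + s) / c + (Real.log c - 1) * x := by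
  rcases hx.eq_or_lt with rfl | hx
  · simp [Real.zero_rpow (by positivity : 1 + s ≠ 0)]
  have hlog := Real.log_le_sub_one_of_pos (show 0 < x ^ s / c by positivity)
  rw [Real.log_div (by positivity) hc.ne', Real.log_rpow hx] at hlog
  rw [Real.rpow_add hx, Real.rpow_one]
  calc s * (x * Real.log x) = x * (s * Real.log x) := by ring
    _ ≤ x * (x ^ s / c + (Real.log c - 1)) := by gcongr; linarith
    _ = _ := by ring

lemma mul_integral_mul_log_le_log {α : Type*} [MeasurableSpace α] {μ : Measure α} {F : α → ℝ}
    {s c : ℝ} (hs : 0 < s) (hc : 0 < c) (hF : ∀ x, 0 ≤ F x) (hF_one : ∫ x, F x ∂μ = 1)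
    (hpow : Integrable (fun x => F x ^ (1 + s)) μ) (hpow_le : ∫ x, F x ^ (1 + s) ∂μ ≤ c)
    (hlog : Integrable (fun x => F x * Real.log (F x)) μ) :
    s * ∫ x, F x * Real.log (F x) ∂μ ≤ Real.log c := by
  have hF_int : Integrable F μ := .of_integral_ne_zero (by simp [hF_one])
  calc s * ∫ x, F x * Real.log (F x) ∂μ
      ≤ ∫ x, (F x ^ (1 + s) / c + (Real.log c - 1) * F x) ∂μ := by
        rw [← integral_const_mul]
        exact integral_mono (hlog.const_mul s) ((hpow.div_const c).add (hF_int.const_mul _))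
          fun x => mul_mul_log_le hs hc (hF x)
    _ = (∫ x, F x ^ (1 + s) ∂μ) / c + (Real.log c - 1) := by
        rw [integral_add (hpow.div_const c) (hF_int.const_mul _), integral_div,
          integral_const_mul, hF_one, mul_one]
    _ ≤ Real.log c := by linarith [(div_le_one hc).2 hpow_le]

lemma norm_sq_rpow_mul {k : ℝ} {Φ f : ℂ → ℂ}
    (hf : ∀ ζ, f ζ = (((1 - ‖ζ‖ ^ 2) ^ k : ℝ) : ℂ) * Φ ζ) {ζ : ℂ} (hζ : ζ ∈ ball (0 : ℂ) 1) :
    ‖f ζ‖ ^ 2 = (1 - ‖ζ‖ ^ 2) ^ (2 * k) * ‖Φ ζ‖ ^ 2 := by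
  have hpos := one_sub_norm_sq_pos hζ
  rw [hf, norm_mul, Complex.norm_real, Real.norm_of_nonneg (by positivity), mul_pow,
    ← Real.rpow_mul_natCast hpos.le, mul_comm k]
  rfl

lemma integrable_rpow_nuMeasure_and_integral_le {k : ℝ} (hk : 1 ≤ k) {Φ f : ℂ → ℂ}
    (hΦ : DifferentiableOn ℂ Φ (ball 0 1))
    (hf : ∀ ζ, f ζ = (((1 - ‖ζ‖ ^ 2) ^ k : ℝ) : ℂ) * Φ ζ)
    (hnorm : ∫ ζ, ‖f ζ‖ ^ 2 ∂(nuMeasure k) = 1) :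
    Integrable (fun ζ => (‖f ζ‖ ^ 2) ^ (1 + 1 / (2 * k))) (nuMeasure k) ∧
      ∫ ζ, (‖f ζ‖ ^ 2) ^ (1 + 1 / (2 * k)) ∂(nuMeasure k) ≤ (2 * k - 1) / (2 * k) := by
  have hmass := integral_nuMeasure_and_integrable_iff (k := k) (a := 2 * k - 2)
    (F := fun ζ => ‖f ζ‖ ^ 2) (g := fun ζ => ‖Φ ζ‖ ^ 2) (by linarith) (by linarith)
    fun ζ hζ => by rw [norm_sq_rpow_mul hf hζ, sub_add_cancel]
  have hpow := integral_nuMeasure_and_integrable_iff (k := k) (a := 2 * k - 1)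
    (F := fun ζ => (‖f ζ‖ ^ 2) ^ (1 + 1 / (2 * k))) (g := fun ζ => (‖Φ ζ‖ ^ 2) ^ (1 + 1 / (2 * k)))
    (by linarith) (by linarith) fun ζ hζ => by
      have hpos := one_sub_norm_sq_pos hζ
      rw [norm_sq_rpow_mul hf hζ, Real.mul_rpow (by positivity) (by positivity),
        ← Real.rpow_mul hpos.le]
      congr 2
      field_simp
      ring
  have hint : Integrable (fun ζ => ‖f ζ‖ ^ 2) (nuMeasure k) :=
    .of_integral_ne_zero (by simp [hnorm])
  obtain ⟨hpow_int, hle⟩ := integrableOn_and_discMean_rpow_le (n := 2 * k) (by linarith) hΦ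
    (hmass.2.1 hint)
  have hone : discMean (2 * k - 2) (fun ζ => ‖Φ ζ‖ ^ 2) = 1 := by
    rw [hmass.1, show 2 * k - 2 + 1 = 2 * k - 1 by ring, div_self (by linarith), one_mul] at hnorm
    exact hnorm
  refine ⟨hpow.2.2 hpow_int, ?_⟩
  rw [hone, Real.one_rpow] at hle
  rw [hpow.1, sub_add_cancel]
  exact mul_le_of_le_one_right (div_nonneg (by linarith) (by linarith)) hle

theorem wehrl_entropy_lower_bound_general {k : ℝ} (hk : 1 ≤ k) {Φ f : ℂ → ℂ}
    (hΦ : DifferentiableOn ℂ Φ (ball 0 1))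
    (hf : ∀ ζ, f ζ = (((1 - ‖ζ‖ ^ 2) ^ k : ℝ) : ℂ) * Φ ζ)
    (hnorm : ∫ ζ, ‖f ζ‖ ^ 2 ∂(nuMeasure k) = 1)
    (hent : Integrable (fun ζ => ‖f ζ‖ ^ 2 * Real.log (‖f ζ‖ ^ 2)) (nuMeasure k)) :
    2 * k * Real.log (2 * k / (2 * k - 1))
      ≤ - ∫ ζ, ‖f ζ‖ ^ 2 * Real.log (‖f ζ‖ ^ 2) ∂(nuMeasure k) := by
  have hc : 0 < (2 * k - 1) / (2 * k) := div_pos (by linarith) (by linarith)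
  obtain ⟨hpow, hpow_le⟩ := integrable_rpow_nuMeasure_and_integral_le hk hΦ hf hnorm
  have hentropy := mul_integral_mul_log_le_log (by positivity) hc (fun ζ => sq_nonneg ‖f ζ‖)
    hnorm hpow hpow_le hent
  rw [one_div_mul_eq_div, div_le_iff₀' (by linarith)] at hentropy
  rw [← inv_div, Real.log_inv]
  linarith

end Entropy

/-- Lower bound for the Wehrl entropy of SU(1,1) coherent state transforms
(Theorem 3.4): for `k > 1` and a normalized coherent state transform
`f(ζ) = (1−|ζ|²)^k Φ(ζ)` (with `Φ` holomorphic and `∫ |f|² dν_k = 1`),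
the Wehrl entropy `S(|f|²) = −∫ |f|² ln(|f|²) dν_k` satisfies
`S(|f|²) ≥ 2k·ln(2k/(2k−1))`.
(Integrability of the entropy integrand expresses that the entropy is well defined.) -/
theorem wehrl_entropy_lower_bound
    (k : ℝ) (hk : 1 < k)
    (Φ : ℂ → ℂ) (hΦ : DifferentiableOn ℂ Φ (ball (0 : ℂ) 1))
    (f : ℂ → ℂ) (hf : ∀ ζ, f ζ = (((1 - ‖ζ‖ ^ 2) ^ k : ℝ) : ℂ) * Φ ζ)
    (hnorm : ∫ ζ, ‖f ζ‖ ^ 2 ∂(nuMeasure k) = 1)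
    (hent : Integrable (fun ζ => ‖f ζ‖ ^ 2 * Real.log (‖f ζ‖ ^ 2)) (nuMeasure k)) :
    2 * k * Real.log (2 * k / (2 * k - 1))
      ≤ - ∫ ζ, ‖f ζ‖ ^ 2 * Real.log (‖f ζ‖ ^ 2) ∂(nuMeasure k) :=
  wehrl_entropy_lower_bound_general hk.le hΦ hf hnorm hent
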